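/- arXiv:2002.06164 — 2 statements merged into one kernel-verified Lean document; each statement's English description precedes it below -/
import Mathlib

section
/- Let M = M₁ ⊕ M₂ be a rank-k matroid on [n] with two connected components with ground sets S and T = [n] \ S. Suppose {S, T} is a crossing partition, i.e. there exist a < b < c < d in cyclic order with a, c ∈ S and b, d ∈ T. Then the matroid polytope Γ_M has a two-dimensional face which is a square with vertex set {e_{Rab}, e_{Rad}, e_{Rbc}, e_{Rcd}} for some (k−2)-element set R ⊆ [n] disjoint from {a,b,c,d}; in particular this face is not a positroid polytope. -/
open scoped BigOperators

/-- The indicator vector `e_B ∈ ℝⁿ` of a subset `B ⊆ [n]`. -/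
noncomputable def ind (n : ℕ) (B : Finset (Fin n)) : Fin n → ℝ :=
  fun i => if i ∈ B then 1 else 0

/-- The polytope `conv{e_B : B ∈ 𝓑} ⊆ ℝⁿ`. -/
noncomputable def polytopeOf (n : ℕ) (𝓑 : Finset (Finset (Fin n))) : Set (Fin n → ℝ) :=
  convexHull ℝ (ind n '' ↑𝓑)

/-- `F` is a face of `P`: the set of maximizers in `P` of some linear functional. -/
def IsFaceOf (n : ℕ) (P F : Set (Fin n → ℝ)) : Prop :=
  ∃ w : Fin n → ℝ, F = {x ∈ P | ∀ y ∈ P, ∑ i, w i * y i ≤ ∑ i, w i * x i}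

/-- The basis exchange axiom. -/
def ExchangeAxiom (n : ℕ) (𝓑 : Finset (Finset (Fin n))) : Prop :=
  ∀ B₁ ∈ 𝓑, ∀ B₂ ∈ 𝓑, ∀ x ∈ B₁ \ B₂, ∃ y ∈ B₂ \ B₁, insert y (B₁.erase x) ∈ 𝓑

/-- Exchange relation whose equivalence classes are the connected components. -/
def exchRel (n : ℕ) (𝓑 : Finset (Finset (Fin n))) (a b : Fin n) : Prop :=
  a = b ∨ ∃ B₁ ∈ 𝓑, ∃ B₂ ∈ 𝓑, a ∈ B₁ ∧ b ∉ B₁ ∧ B₂ = insert b (B₁.erase a)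

/-- The maximal minor of a `k × n` matrix with column set `I` (zero if `|I| ≠ k`). -/
noncomputable def minor (k n : ℕ) (A : Matrix (Fin k) (Fin n) ℝ) (I : Finset (Fin n)) : ℝ :=
  if h : I.card = k then (A.submatrix id fun j : Fin k => ((I.orderIsoOfFin h j : I) : Fin n)).det
  else 0

/-- `𝓑` is the set of bases of a positroid of rank `k` on `[n]`: it is realizable
by a real `k × n` matrix of rank `k` all of whose maximal minors are nonnegative. -/
def IsPositroid (n k : ℕ) (𝓑 : Set (Finset (Fin n))) : Prop :=
  ∃ A : Matrix (Fin k) (Fin n) ℝ, A.rank = k ∧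
    (∀ I : Finset (Fin n), 0 ≤ minor k n A I) ∧
    (∀ I : Finset (Fin n), I.card = k → (I ∈ 𝓑 ↔ minor k n A I ≠ 0))

/-!
An exchange `a ↔ c` in `M₁` and an exchange `b ↔ d` in `M₂` give bases `R₁a`, `R₁c` of `M₁` and
`R₂b`, `R₂d` of `M₂`. Put `R = R₁ ∪ R₂`. The bases `B` of `M` with `R ⊆ B ⊆ Rabcd` are the
maximizers of a linear functional, so they span a face of `Γ_M`. As `M` is a direct sum, this
interval of bases is the product of `{R₁a, R₁c}` and `{R₂b, R₂d}`, and the face is the product of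
two edges. It is not a positroid polytope: the three-term Plücker relation
`p_{Rab} p_{Rcd} - p_{Rac} p_{Rbd} + p_{Rad} p_{Rbc} = 0`
would have a vanishing middle term and two positive ones.
-/

open Matrix (vecCons)
open scoped FinsetFamily Matrix

theorem convexHull_inter_eq_of_isExtreme {𝕜 E : Type*} [Field 𝕜] [LinearOrder 𝕜]
    [IsStrictOrderedRing 𝕜] [AddCommGroup E] [Module 𝕜 E] {V F : Set E}
    (hF : IsExtreme 𝕜 (convexHull 𝕜 V) F) (hconv : Convex 𝕜 F) :
    convexHull 𝕜 (V ∩ F) = F := by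
  refine (convexHull_min Set.inter_subset_right hconv).antisymm fun x hx => ?_
  have hsub : convexHull 𝕜 V ⊆ {y ∈ convexHull 𝕜 V | y ∈ F → y ∈ convexHull 𝕜 (V ∩ F)} := by
    refine convexHull_min (fun v hv => ⟨subset_convexHull 𝕜 V hv, fun hvF =>
      subset_convexHull 𝕜 _ ⟨hv, hvF⟩⟩) (convex_iff_openSegment_subset.2 ?_)
    rintro y ⟨hyV, hy⟩ z ⟨hzV, hz⟩ p hp
    refine ⟨(convex_convexHull 𝕜 V).openSegment_subset hyV hzV hp, fun hpF => ?_⟩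
    exact (convex_convexHull 𝕜 _).openSegment_subset
      (hy (hF.left_mem_of_mem_openSegment hyV hzV hpF hp))
      (hz (hF.right_mem_of_mem_openSegment hyV hzV hpF hp)) hp
  exact (hsub (hF.subset hx)).2 hx

theorem finrank_vectorSpan_parallelogram {𝕜 E : Type*} [Field 𝕜] [AddCommGroup E] [Module 𝕜 E]
    (p : E) {u v : E} (huv : LinearIndependent 𝕜 ![u, v]) :
    Module.finrank 𝕜 (vectorSpan 𝕜 {p, p + v, p + u, p + u + v}) = 2 := by
  have hspan : vectorSpan 𝕜 {p, p + v, p + u, p + u + v} =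
      Submodule.span 𝕜 (Set.range ![u, v]) := by
    rw [vectorSpan_eq_span_vsub_set_right 𝕜 (Set.mem_insert p _)]
    simp only [Set.image_insert_eq, Set.image_singleton, vsub_eq_sub, sub_self,
      add_sub_cancel_left, add_assoc, Submodule.span_insert_zero, Matrix.range_cons,
      Matrix.range_empty, Set.union_empty, Set.singleton_union]
    refine le_antisymm (Submodule.span_le.2 ?_) (Submodule.span_mono ?_)
    · have hu : u ∈ Submodule.span 𝕜 {u, v} := Submodule.subset_span (by simp)
      have hv : v ∈ Submodule.span 𝕜 {u, v} := Submodule.subset_span (by simp)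
      rintro x (rfl | rfl | rfl)
      exacts [hv, hu, Submodule.add_mem _ hu hv]
    · rintro x (rfl | rfl) <;> simp
  rw [hspan, finrank_span_eq_card huv, Fintype.card_fin]

theorem isFaceOf_polytopeOf {n : ℕ} {𝓑 𝓕 : Finset (Finset (Fin n))} {w : Fin n → ℝ} {M : ℝ}
    (h𝓕 : 𝓕.Nonempty) (hsub : 𝓕 ⊆ 𝓑) (hle : ∀ B ∈ 𝓑, ∑ i, w i * ind n B i ≤ M)
    (heq : ∀ B ∈ 𝓑, ∑ i, w i * ind n B i = M ↔ B ∈ 𝓕) :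
    IsFaceOf n (polytopeOf n 𝓑) (polytopeOf n 𝓕) := by
  let l : StrongDual ℝ (Fin n → ℝ) := ∑ i, w i • ContinuousLinearMap.proj i
  have hl (x : Fin n → ℝ) : l x = ∑ i, w i * x i := by simp [l]
  simp only [← hl] at hle heq
  have hmax : ∀ y ∈ polytopeOf n 𝓑, l y ≤ M :=
    convexHull_min (Set.forall_mem_image.2 hle) (convex_halfSpace_le l.isLinear M)
  have hface : ∀ B ∈ 𝓑, ind n B ∈ l.toExposed (polytopeOf n 𝓑) ↔ B ∈ 𝓕 := by
    intro B hB
    have hmem {C : Finset (Fin n)} (hC : C ∈ 𝓑) : ind n C ∈ polytopeOf n 𝓑 :=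
      subset_convexHull ℝ _ (Set.mem_image_of_mem _ hC)
    rw [← heq B hB]
    refine ⟨fun h => (hle B hB).antisymm ?_,
      fun h => ⟨hmem hB, fun y hy => (hmax y hy).trans_eq h.symm⟩⟩
    obtain ⟨C, hC⟩ := h𝓕
    exact ((heq C (hsub hC)).2 hC).ge.trans (h.2 _ (hmem (hsub hC)))
  have hexp : IsExposed ℝ (polytopeOf n 𝓑) (l.toExposed (polytopeOf n 𝓑)) :=
    ContinuousLinearMap.toExposed.isExposed
  have hverts : ind n '' 𝓑 ∩ l.toExposed (polytopeOf n 𝓑) = ind n '' 𝓕 := by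
    ext x
    constructor
    · rintro ⟨⟨B, hB, rfl⟩, hx⟩
      exact Set.mem_image_of_mem _ ((hface B hB).1 hx)
    · rintro ⟨B, hB, rfl⟩
      exact ⟨Set.mem_image_of_mem _ (hsub hB), (hface B (hsub hB)).2 hB⟩
  refine ⟨w, ?_⟩
  simp only [← hl]
  change _ = l.toExposed (polytopeOf n 𝓑)
  rw [← convexHull_inter_eq_of_isExtreme hexp.isExtreme (hexp.convex (convex_convexHull ℝ _)),
    hverts, polytopeOf]

theorem isFaceOf_polytopeOf_inter_Icc {n : ℕ} {𝓑 : Finset (Finset (Fin n))} {R Q : Finset (Fin n)}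
    (h : (𝓑 ∩ Finset.Icc R Q).Nonempty) :
    IsFaceOf n (polytopeOf n 𝓑) (polytopeOf n (𝓑 ∩ Finset.Icc R Q)) := by
  have hRQ : R ⊆ Q := Finset.nonempty_Icc.1 (h.mono Finset.inter_subset_right)
  -- This weight sums to `|B ∩ R| - |B \ Q|` over `B`, hence to at most `|R|`.
  let w : Fin n → ℝ := fun i => if i ∈ R then 1 else if i ∈ Q then 0 else -1
  have hle (B : Finset (Fin n)) : ∀ i ∈ Finset.univ, w i * ind n B i ≤ ind n R i := by
    intro i _
    simp only [w, ind]
    split_ifs <;> norm_num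
  have heq (B : Finset (Fin n)) (i : Fin n) :
      w i * ind n B i = ind n R i ↔ (i ∈ R → i ∈ B) ∧ (i ∈ B → i ∈ Q) := by
    have := @hRQ i
    simp only [w, ind]
    split_ifs <;> simp_all
  refine isFaceOf_polytopeOf (w := w) (M := ∑ i, ind n R i) h Finset.inter_subset_left
    (fun B _ => Finset.sum_le_sum (hle B)) fun B hB => ?_
  rw [Finset.sum_eq_sum_iff_of_le (hle B)]
  simp only [Finset.mem_univ, forall_const, heq, forall_and, Finset.mem_inter, hB, true_and,
    Finset.mem_Icc, Finset.subset_iff]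

theorem sups_inter_Icc_sup {α : Type*} [DistribLattice α] [OrderBot α] [LocallyFiniteOrder α]
    [DecidableEq α] {X Y : Finset α} {s t p q r u : α} (hst : Disjoint s t)
    (hX : ∀ x ∈ X, x ≤ s) (hY : ∀ y ∈ Y, y ≤ t) (hp : p ≤ s) (hq : q ≤ s) (hr : r ≤ t)
    (hu : u ≤ t) :
    (X ⊻ Y) ∩ Finset.Icc (p ⊔ r) (q ⊔ u) = (X ∩ Finset.Icc p q) ⊻ (Y ∩ Finset.Icc r u) := by
  ext z
  simp only [Finset.mem_inter, Finset.mem_sups, Finset.mem_Icc]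
  constructor
  · rintro ⟨⟨x, hx, y, hy, rfl⟩, hlow, hup⟩
    obtain ⟨hpxy, hrxy⟩ := sup_le_iff.1 hlow
    obtain ⟨hxqu, hyqu⟩ := sup_le_iff.1 hup
    exact ⟨x, ⟨hx, (hst.mono hp (hY y hy)).left_le_of_le_sup_right hpxy,
        (hst.mono (hX x hx) hu).left_le_of_le_sup_right hxqu⟩,
      y, ⟨hy, (hst.symm.mono hr (hX x hx)).left_le_of_le_sup_left hrxy,
        (hst.symm.mono (hY y hy) hq).left_le_of_le_sup_left hyqu⟩, rfl⟩
  · rintro ⟨x, ⟨hx, hpx, hxq⟩, y, ⟨hy, hry, hyu⟩, rfl⟩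
    exact ⟨⟨x, hx, y, hy, rfl⟩, sup_le_sup hpx hry, sup_le_sup hxq hyu⟩

theorem inter_Icc_insert_insert {α : Type*} [DecidableEq α] {𝓑 : Finset (Finset α)}
    {R : Finset α} {a c : α} (hcard : ∀ B ∈ 𝓑, B.card = R.card + 1) (ha : insert a R ∈ 𝓑)
    (hc : insert c R ∈ 𝓑) :
    𝓑 ∩ Finset.Icc R (insert a (insert c R)) = {insert a R, insert c R} := by
  ext B
  simp only [Finset.mem_inter, Finset.mem_Icc, Finset.mem_insert, Finset.mem_singleton]
  constructor
  · rintro ⟨hB, hRB, hBac⟩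
    obtain ⟨x, hx, rfl⟩ := Finset.exists_eq_insert_iff.2 ⟨hRB, (hcard B hB).symm⟩
    have := hBac (Finset.mem_insert_self x R)
    simp only [Finset.mem_insert, hx, or_false] at this
    rcases this with rfl | rfl <;> simp
  · rintro (rfl | rfl)
    exacts [⟨ha, by grind⟩, ⟨hc, by grind⟩]

theorem exists_insert_mem_of_exchRel {n : ℕ} {𝓑 : Finset (Finset (Fin n))} {a c : Fin n}
    (h : exchRel n 𝓑 a c) (hac : a ≠ c) :
    ∃ R, a ∉ R ∧ c ∉ R ∧ insert a R ∈ 𝓑 ∧ insert c R ∈ 𝓑 := by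
  obtain ⟨B, hB, _, hB', ha, hc, rfl⟩ := h.resolve_left hac
  exact ⟨B.erase a, by simp, by simp [hc], by rwa [Finset.insert_erase ha], hB'⟩

theorem isFaceOf_polytopeOf_sups_square {n : ℕ} {S T : Finset (Fin n)} (hST : Disjoint S T)
    {𝓑₁ 𝓑₂ : Finset (Finset (Fin n))} (h₁sub : ∀ B ∈ 𝓑₁, B ⊆ S) (h₂sub : ∀ B ∈ 𝓑₂, B ⊆ T)
    {R₁ R₂ : Finset (Fin n)} (h₁card : ∀ B ∈ 𝓑₁, B.card = R₁.card + 1)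
    (h₂card : ∀ B ∈ 𝓑₂, B.card = R₂.card + 1) {a b c d : Fin n}
    (ha : insert a R₁ ∈ 𝓑₁) (hc : insert c R₁ ∈ 𝓑₁) (hb : insert b R₂ ∈ 𝓑₂)
    (hd : insert d R₂ ∈ 𝓑₂) :
    IsFaceOf n (polytopeOf n (𝓑₁ ⊻ 𝓑₂))
      (convexHull ℝ {ind n (insert a (insert b (R₁ ∪ R₂))), ind n (insert a (insert d (R₁ ∪ R₂))),
        ind n (insert b (insert c (R₁ ∪ R₂))), ind n (insert c (insert d (R₁ ∪ R₂)))}) := by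
  have hsquare : (𝓑₁ ⊻ 𝓑₂) ∩ Finset.Icc (R₁ ⊔ R₂)
        (insert a (insert c R₁) ⊔ insert b (insert d R₂)) =
      {insert a R₁, insert c R₁} ⊻ {insert b R₂, insert d R₂} := by
    have haS := h₁sub _ ha
    have hcS := h₁sub _ hc
    have hbT := h₂sub _ hb
    have hdT := h₂sub _ hd
    rw [sups_inter_Icc_sup hST h₁sub h₂sub, inter_Icc_insert_insert h₁card ha hc,
      inter_Icc_insert_insert h₂card hb hd] <;> grind
  have hverts : {insert a R₁, insert c R₁} ⊻ {insert b R₂, insert d R₂} =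
      ({insert a (insert b (R₁ ∪ R₂)), insert a (insert d (R₁ ∪ R₂)),
        insert b (insert c (R₁ ∪ R₂)), insert c (insert d (R₁ ∪ R₂))} :
          Finset (Finset (Fin n))) := by
    ext B
    simp only [Finset.mem_sups, Finset.mem_insert, Finset.mem_singleton, exists_eq_or_imp,
      exists_eq_left]
    grind
  have hface := isFaceOf_polytopeOf_inter_Icc (𝓑 := 𝓑₁ ⊻ 𝓑₂)
    (hsquare ▸ hverts ▸ Finset.insert_nonempty _ _)
  rw [hsquare, hverts] at hface
  simpa [polytopeOf, Set.image_insert_eq] using hface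

theorem ind_insert {n : ℕ} {x : Fin n} {R : Finset (Fin n)} (hx : x ∉ R) :
    ind n (insert x R) = ind n R + Pi.single x 1 := by
  ext i
  rcases eq_or_ne i x with rfl | h
  · simp [ind, hx]
  · simp [ind, h]

theorem linearIndependent_single_sub_single {𝕜 ι : Type*} [Field 𝕜] [DecidableEq ι] {a b c d : ι}
    (hac : a ≠ c) (had : a ≠ d) (hbc : b ≠ c) (hbd : b ≠ d) (hcd : c ≠ d) :
    LinearIndependent 𝕜
      ![(Pi.single c 1 - Pi.single a 1 : ι → 𝕜), Pi.single d 1 - Pi.single b 1] := by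
  refine LinearIndependent.pair_iff.2 fun s t hst => ⟨?_, ?_⟩
  · simpa [hac.symm, hbc.symm, hcd] using congrFun hst c
  · simpa [had.symm, hbd.symm, hcd.symm] using congrFun hst d

theorem finrank_direction_square {n : ℕ} {R : Finset (Fin n)} {a b c d : Fin n}
    (hnodup : [a, b, c, d].Nodup) (ha : a ∉ R) (hb : b ∉ R) (hc : c ∉ R) (hd : d ∉ R) :
    Module.finrank ℝ (affineSpan ℝ
      (convexHull ℝ {ind n (insert a (insert b R)), ind n (insert a (insert d R)),
        ind n (insert b (insert c R)), ind n (insert c (insert d R))} :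
          Set (Fin n → ℝ))).direction = 2 := by
  obtain ⟨⟨hab, hac, had⟩, ⟨hbc, hbd⟩, hcd⟩ :
      (a ≠ b ∧ a ≠ c ∧ a ≠ d) ∧ (b ≠ c ∧ b ≠ d) ∧ c ≠ d := by simpa using hnodup
  have hvert {x y : Fin n} (hxy : x ≠ y) (hx : x ∉ R) (hy : y ∉ R) :
      ind n (insert x (insert y R)) = ind n R + Pi.single y 1 + Pi.single x 1 := by
    rw [ind_insert (by simp [hxy, hx]), ind_insert hy]
  rw [affineSpan_convexHull, direction_affineSpan, hvert hab ha hb, hvert had ha hd,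
    hvert hbc hb hc, hvert hcd hc hd,
    ← finrank_vectorSpan_parallelogram (ind n R + Pi.single b 1 + Pi.single a 1)
      (linearIndependent_single_sub_single (𝕜 := ℝ) hac had hbc hbd hcd)]
  congr! 4 <;> abel_nf

section ThreeTermPluecker

variable {𝕜 V : Type*} [Field 𝕜] [AddCommGroup V] [Module 𝕜 V] [FiniteDimensional 𝕜 V]

-- The left-hand side is the alternatization of `φ ⊗ g`, an alternating form in more than `dim V`
-- vectors.
theorem sum_neg_one_pow_mul_map_removeNth_eq_zero {k : ℕ} (hk : Module.finrank 𝕜 V ≤ k)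
    (φ : V →ₗ[𝕜] 𝕜) (g : V [⋀^Fin k]→ₗ[𝕜] 𝕜) (v : Fin (k + 1) → V) :
    ∑ i : Fin (k + 1), (-1) ^ (i : ℕ) * (φ (v i) * g (i.removeNth v)) = 0 := by
  have hdep : ¬ LinearIndependent 𝕜 v := fun h => by
    simpa using h.fintype_card_le_finrank.trans hk
  simpa [AlternatingMap.alternatizeUncurryFin_apply] using
    (AlternatingMap.alternatizeUncurryFin (φ.smulRight g)).map_linearDependent v hdep

theorem removeNth_succ_vecCons {α : Type*} {n : ℕ} (i : Fin (n + 1)) (x : α)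
    (v : Fin (n + 1) → α) : i.succ.removeNth (vecCons x v) = vecCons x (i.removeNth v) := by
  ext j
  cases j using Fin.cases <;> simp [Fin.removeNth_apply]

theorem three_term_pluecker {m : ℕ} (hm : Module.finrank 𝕜 V ≤ m + 2)
    (g : V [⋀^Fin (m + 2)]→ₗ[𝕜] 𝕜) (r : Fin m → V) (a b c d : V) :
    g (vecCons a (vecCons b r)) * g (vecCons c (vecCons d r)) -
        g (vecCons a (vecCons c r)) * g (vecCons b (vecCons d r)) +
      g (vecCons a (vecCons d r)) * g (vecCons b (vecCons c r)) = 0 := by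
  let φ : V →ₗ[𝕜] 𝕜 := g.toMultilinearMap.toLinearMap (vecCons 0 (vecCons d r)) 0
  have hφ (x : V) : φ x = g (vecCons x (vecCons d r)) := by
    simp [φ, vecCons]
  have hr (i : Fin m) : g (vecCons (r i) (vecCons d r)) = 0 :=
    g.map_eq_zero_of_eq _ (i := 0) (j := i.succ.succ) (by simp) (Fin.succ_ne_zero _).symm
  have hsum := sum_neg_one_pow_mul_map_removeNth_eq_zero hm φ g
    (vecCons a (vecCons b (vecCons c r)))
  have hzero {n : ℕ} (x : V) (v : Fin n → V) : Fin.removeNth 0 (vecCons x v) = v := rfl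
  simp only [Fin.sum_univ_succ, hφ, Matrix.cons_val_zero, Matrix.cons_val_succ, hr, zero_mul,
    mul_zero, Finset.sum_const_zero, hzero, removeNth_succ_vecCons, Fin.val_succ,
    Fin.val_zero] at hsum
  linear_combination hsum

theorem orderEmbOfFin_insert {α : Type*} [LinearOrder α] {R : Finset α} {x : α} {m : ℕ}
    (hR : R.card = m) (h : (insert x R).card = m + 1) :
    ∃ p : Fin (m + 1), (p : ℕ) = (R.filter (· < x)).card ∧
      ⇑((insert x R).orderEmbOfFin h) =
        p.insertNth (α := fun _ => α) x (R.orderEmbOfFin hR) := by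
  set s := (insert x R).orderEmbOfFin h with hs
  obtain ⟨p, hp⟩ : x ∈ Set.range s := by simp [hs]
  have hrem : p.removeNth s = R.orderEmbOfFin hR := by
    refine Finset.orderEmbOfFin_unique hR (fun j => ?_) (s.strictMono.removeNth p)
    have hmem : s (p.succAbove j) ∈ insert x R := Finset.orderEmbOfFin_mem _ _ _
    have hne : s (p.succAbove j) ≠ x := hp ▸ s.injective.ne (p.succAbove_ne j)
    exact Finset.mem_of_mem_insert_of_ne hmem hne
  have hIio : R.filter (· < x) = (Finset.Iio p).map s.toEmbedding := by
    have himage : Finset.univ.map s.toEmbedding = insert x R := Finset.map_orderEmbOfFin_univ _ h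
    calc R.filter (· < x) = (insert x R).filter (· < x) := by
          rw [Finset.filter_insert, if_neg (lt_irrefl x)]
      _ = (Finset.Iio p).map s.toEmbedding := by
          rw [← himage, Finset.filter_map, ← hp]
          congr 1
          ext i
          simp
  exact ⟨p, by simp [hIio], by rw [← hrem, ← hp, Fin.insertNth_self_removeNth]⟩

theorem map_comp_orderEmbOfFin_insert {R V N α : Type*} [CommRing R] [AddCommGroup V] [Module R V]
    [AddCommGroup N] [Module R N] [LinearOrder α] {m : ℕ}
    (g : V [⋀^Fin (m + 1)]→ₗ[R] N) (v : α → V) {s : Finset α} {x : α}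
    (hs : s.card = m) (h : (insert x s).card = m + 1) :
    g (v ∘ (insert x s).orderEmbOfFin h) =
      (-1) ^ (s.filter (· < x)).card • g (vecCons (v x) (v ∘ s.orderEmbOfFin hs)) := by
  obtain ⟨p, hp, hins⟩ := orderEmbOfFin_insert hs h
  have : v ∘ p.insertNth x (s.orderEmbOfFin hs) = p.insertNth (v x) (v ∘ s.orderEmbOfFin hs) := by
    ext i
    cases i using p.succAboveCases <;> simp
  rw [hins, this, AlternatingMap.map_insertNth, hp]

theorem minor_insert_insert {n m : ℕ} (A : Matrix (Fin (m + 2)) (Fin n) ℝ) {R : Finset (Fin n)}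
    (hR : R.card = m) {x y : Fin n} (hxy : x < y) (hx : x ∉ R) (hy : y ∉ R) :
    minor (m + 2) n A (insert x (insert y R)) =
      (-1) ^ (R.filter (· < x)).card * ((-1) ^ (R.filter (· < y)).card *
        Matrix.detRowAlternating (R := ℝ) (vecCons (Aᵀ x)
          (vecCons (Aᵀ y) (Aᵀ ∘ R.orderEmbOfFin hR)))) := by
  have hyR : (insert y R).card = m + 1 := by rw [Finset.card_insert_of_notMem hy, hR]
  have hxyR : (insert x (insert y R)).card = m + 2 := by
    rw [Finset.card_insert_of_notMem (by simp [hx, hxy.ne]), hyR]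
  have hfilter : (insert y R).filter (· < x) = R.filter (· < x) := by
    rw [Finset.filter_insert, if_neg hxy.not_gt]
  let D : (Fin (m + 2) → ℝ) [⋀^Fin (m + 2)]→ₗ[ℝ] ℝ := Matrix.detRowAlternating
  calc minor (m + 2) n A (insert x (insert y R))
    _ = D (Aᵀ ∘ (insert x (insert y R)).orderEmbOfFin hxyR) := by
      rw [minor, dif_pos hxyR, ← Matrix.det_transpose]
      rfl
    _ = (-1) ^ (R.filter (· < x)).card *
        D.curryLeft (Aᵀ x) (Aᵀ ∘ (insert y R).orderEmbOfFin hyR) := by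
      rw [map_comp_orderEmbOfFin_insert D Aᵀ hyR hxyR, hfilter]
      simp
    _ = _ := by
      rw [map_comp_orderEmbOfFin_insert (D.curryLeft _) Aᵀ hR hyR]
      simp [D]

theorem minor_three_term_pluecker {n m : ℕ} (A : Matrix (Fin (m + 2)) (Fin n) ℝ)
    {R : Finset (Fin n)} (hR : R.card = m) {a b c d : Fin n} (hab : a < b) (hbc : b < c)
    (hcd : c < d) (ha : a ∉ R) (hb : b ∉ R) (hc : c ∉ R) (hd : d ∉ R) :
    minor (m + 2) n A (insert a (insert b R)) * minor (m + 2) n A (insert c (insert d R)) -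
        minor (m + 2) n A (insert a (insert c R)) * minor (m + 2) n A (insert b (insert d R)) +
      minor (m + 2) n A (insert a (insert d R)) * minor (m + 2) n A (insert b (insert c R)) =
        0 := by
  have hpl := three_term_pluecker (by simp) (Matrix.detRowAlternating (R := ℝ))
    (Aᵀ ∘ R.orderEmbOfFin hR) (Aᵀ a) (Aᵀ b) (Aᵀ c) (Aᵀ d)
  have hac := hab.trans hbc
  have hbd := hbc.trans hcd
  rw [minor_insert_insert A hR hab ha hb, minor_insert_insert A hR hcd hc hd,
    minor_insert_insert A hR hac ha hc, minor_insert_insert A hR hbd hb hd,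
    minor_insert_insert A hR (hab.trans hbd) ha hd, minor_insert_insert A hR hbc hb hc]
  linear_combination (-1) ^ (R.filter (· < a)).card * (-1) ^ (R.filter (· < b)).card *
    (-1) ^ (R.filter (· < c)).card * (-1) ^ (R.filter (· < d)).card * hpl

theorem not_isPositroid_crossing_square {n k : ℕ} {R : Finset (Fin n)} (hk : R.card + 2 = k)
    {a b c d : Fin n} (hab : a < b) (hbc : b < c) (hcd : c < d)
    (ha : a ∉ R) (hb : b ∉ R) (hc : c ∉ R) (hd : d ∉ R) :
    ¬ IsPositroid n k ({insert a (insert b R), insert a (insert d R),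
      insert b (insert c R), insert c (insert d R)} : Set (Finset (Fin n))) := by
  subst hk
  rintro ⟨A, -, hnonneg, hbasis⟩
  have had := hab.trans (hbc.trans hcd)
  have hcard {x y : Fin n} (hxy : x < y) (hx : x ∉ R) (hy : y ∉ R) :
      (insert x (insert y R)).card = R.card + 2 := by
    rw [Finset.card_insert_of_notMem (by simp [hx, hxy.ne]), Finset.card_insert_of_notMem hy]
  have hpos {I : Finset (Fin n)} (hI : I.card = R.card + 2) (hmem : I ∈ _) :
      0 < minor (R.card + 2) n A I :=
    (hnonneg I).lt_of_ne' ((hbasis I hI).1 hmem)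
  have hac : minor (R.card + 2) n A (insert a (insert c R)) = 0 := by
    by_contra hne
    have hmem := (hbasis _ (hcard (hab.trans hbc) ha hc)).2 hne
    have hb' : b ∉ insert a (insert c R) := by simp [hb, hab.ne', hbc.ne]
    have hd' : d ∉ insert a (insert c R) := by simp [hd, had.ne', hcd.ne']
    rcases hmem with h | h | h | h <;> rw [h] at hb' hd' <;> simp at hb' hd'
  have hpl := minor_three_term_pluecker A rfl hab hbc hcd ha hb hc hd
  rw [hac, zero_mul, sub_zero] at hpl
  exact (add_pos (mul_pos (hpos (hcard hab ha hb) (by simp)) (hpos (hcard hcd hc hd) (by simp)))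
    (mul_pos (hpos (hcard had ha hd) (by simp)) (hpos (hcard hbc hb hc) (by simp)))).ne' hpl

end ThreeTermPluecker

theorem crossing_direct_sum_square_face_general {n k₁ k₂ : ℕ} {S T : Finset (Fin n)}
    (hST : Disjoint S T) {𝓑₁ 𝓑₂ : Finset (Finset (Fin n))}
    (h₁sub : ∀ B ∈ 𝓑₁, B ⊆ S) (h₁k : ∀ B ∈ 𝓑₁, B.card = k₁)
    (h₂sub : ∀ B ∈ 𝓑₂, B ⊆ T) (h₂k : ∀ B ∈ 𝓑₂, B.card = k₂)
    {a b c d : Fin n} (hab : a < b) (hbc : b < c) (hcd : c < d)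
    (h₁exch : exchRel n 𝓑₁ a c) (h₂exch : exchRel n 𝓑₂ b d) :
    ∃ R : Finset (Fin n), R.card + 2 = k₁ + k₂ ∧ a ∉ R ∧ b ∉ R ∧ c ∉ R ∧ d ∉ R ∧
      IsFaceOf n (polytopeOf n (𝓑₁ ⊻ 𝓑₂))
        (convexHull ℝ {ind n (insert a (insert b R)), ind n (insert a (insert d R)),
          ind n (insert b (insert c R)), ind n (insert c (insert d R))}) ∧
      Module.finrank ℝ (affineSpan ℝ
        (convexHull ℝ {ind n (insert a (insert b R)), ind n (insert a (insert d R)),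
          ind n (insert b (insert c R)), ind n (insert c (insert d R))} :
            Set (Fin n → ℝ))).direction = 2 ∧
      ¬ IsPositroid n (k₁ + k₂) ({insert a (insert b R), insert a (insert d R),
        insert b (insert c R), insert c (insert d R)} : Set (Finset (Fin n))) := by
  obtain ⟨R₁, haR₁, hcR₁, ha, hc⟩ := exists_insert_mem_of_exchRel h₁exch (hab.trans hbc).ne
  obtain ⟨R₂, hbR₂, hdR₂, hb, hd⟩ := exists_insert_mem_of_exchRel h₂exch (hbc.trans hcd).ne
  have hk₁ : k₁ = R₁.card + 1 := by rw [← h₁k _ ha, Finset.card_insert_of_notMem haR₁]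
  have hk₂ : k₂ = R₂.card + 1 := by rw [← h₂k _ hb, Finset.card_insert_of_notMem hbR₂]
  subst hk₁ hk₂
  have hR : (R₁ ∪ R₂).card + 2 = R₁.card + 1 + (R₂.card + 1) := by
    have hdisj : Disjoint R₁ R₂ := hST.mono (by grind) (by grind)
    rw [Finset.card_union_of_disjoint hdisj]
    ring
  have haR : a ∉ R₁ ∪ R₂ := by grind
  have hbR : b ∉ R₁ ∪ R₂ := by grind
  have hcR : c ∉ R₁ ∪ R₂ := by grind
  have hdR : d ∉ R₁ ∪ R₂ := by grind
  have hnodup : [a, b, c, d].Nodup := by grind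
  exact ⟨R₁ ∪ R₂, hR, haR, hbR, hcR, hdR,
    isFaceOf_polytopeOf_sups_square hST h₁sub h₂sub h₁k h₂k ha hc hb hd,
    finrank_direction_square hnodup haR hbR hcR hdR,
    not_isPositroid_crossing_square hR hab hbc hcd haR hbR hcR hdR⟩

/-- **Crossing direct sums give non-positroidal square faces.** Suppose the rank-`k`
matroid `M = M₁ ⊕ M₂` on `[n]` has two connected components, with ground sets
`S` and `T = [n] \ S`, and `{S,T}` is a crossing partition (there are
`a < b < c < d` with `a, c ∈ S`, `b, d ∈ T`).  Then `Γ_M` has a two-dimensional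
square face with vertex set `{e_{Rab}, e_{Rad}, e_{Rbc}, e_{Rcd}}` for some
`(k−2)`-set `R` disjoint from `{a,b,c,d}`; in particular this face is not a
positroid polytope. -/
theorem crossing_direct_sum_square_face (n k k₁ k₂ : ℕ) (S : Finset (Fin n))
    (𝓑₁ 𝓑₂ 𝓑 : Finset (Finset (Fin n)))
    -- M₁ is a matroid on ground set S
    (h₁sub : ∀ B ∈ 𝓑₁, B ⊆ S) (h₁0 : 𝓑₁.Nonempty) (h₁k : ∀ B ∈ 𝓑₁, B.card = k₁)
    (h₁ex : ExchangeAxiom n 𝓑₁)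
    -- M₂ is a matroid on ground set T = Sᶜ
    (h₂sub : ∀ B ∈ 𝓑₂, B ⊆ Sᶜ) (h₂0 : 𝓑₂.Nonempty) (h₂k : ∀ B ∈ 𝓑₂, B.card = k₂)
    (h₂ex : ExchangeAxiom n 𝓑₂)
    -- M₁ and M₂ are connected on their ground sets
    (h₁conn : ∀ a ∈ S, ∀ b ∈ S, exchRel n 𝓑₁ a b)
    (h₂conn : ∀ a ∈ Sᶜ, ∀ b ∈ Sᶜ, exchRel n 𝓑₂ a b)
    -- M = M₁ ⊕ M₂ has rank k
    (hkk : k₁ + k₂ = k)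
    (h𝓑 : ∀ B : Finset (Fin n), B ∈ 𝓑 ↔ ∃ B₁ ∈ 𝓑₁, ∃ B₂ ∈ 𝓑₂, B = B₁ ∪ B₂)
    -- {S, T} is a crossing partition
    (a b c d : Fin n) (hab : a < b) (hbc : b < c) (hcd : c < d)
    (haS : a ∈ S) (hcS : c ∈ S) (hbT : b ∉ S) (hdT : d ∉ S) :
    ∃ a' b' c' d' : Fin n, a' < b' ∧ b' < c' ∧ c' < d' ∧
      ∃ R : Finset (Fin n), R.card + 2 = k ∧
        a' ∉ R ∧ b' ∉ R ∧ c' ∉ R ∧ d' ∉ R ∧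
        IsFaceOf n (polytopeOf n 𝓑)
          (convexHull ℝ {ind n (insert a' (insert b' R)), ind n (insert a' (insert d' R)),
            ind n (insert b' (insert c' R)), ind n (insert c' (insert d' R))}) ∧
        Module.finrank ℝ (affineSpan ℝ
          (convexHull ℝ {ind n (insert a' (insert b' R)), ind n (insert a' (insert d' R)),
            ind n (insert b' (insert c' R)), ind n (insert c' (insert d' R))} :
              Set (Fin n → ℝ))).direction = 2 ∧
        ¬ IsPositroid n k ({insert a' (insert b' R), insert a' (insert d' R),
            insert b' (insert c' R), insert c' (insert d' R)} : Set (Finset (Fin n))) := by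
  obtain rfl : 𝓑 = 𝓑₁ ⊻ 𝓑₂ := by ext B; simp [h𝓑, eq_comm]
  exact ⟨a, b, c, d, hab, hbc, hcd, hkk ▸ crossing_direct_sum_square_face_general
    disjoint_compl_right h₁sub h₁k h₂sub h₂k hab hbc hcd (h₁conn a haS c hcS)
    (h₂conn b (by simpa) d (by simpa))⟩
end

section
/- Let P = {P_I} ∈ ℝ^(C(n,k)) be a height function on the vertices of the hypersimplex Δ_{k,n}, and let D_P be the induced regular subdivision. If P is a positive tropical Plücker vector, then every face of D_P is positroidal; conversely, if every face of D_P is positroidal, then P is a positive tropical Plücker vector. -/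
open scoped BigOperators

/-- `P` is a positive tropical Plücker vector: for all `S` of size `k−2` and
`a < b < c < d` disjoint from `S`, either
`P_{Sac}+P_{Sbd} = P_{Sab}+P_{Scd} ≤ P_{Sad}+P_{Sbc}` or
`P_{Sac}+P_{Sbd} = P_{Sad}+P_{Sbc} ≤ P_{Sab}+P_{Scd}`. -/
def IsPosTropPluecker (n k : ℕ) (P : Finset (Fin n) → ℝ) : Prop :=
  ∀ S : Finset (Fin n), S.card + 2 = k → ∀ a b c d : Fin n,
    a < b → b < c → c < d → a ∉ S → b ∉ S → c ∉ S → d ∉ S →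
    ((P (insert a (insert c S)) + P (insert b (insert d S)) =
        P (insert a (insert b S)) + P (insert c (insert d S)) ∧
      P (insert a (insert b S)) + P (insert c (insert d S)) ≤
        P (insert a (insert d S)) + P (insert b (insert c S))) ∨
     (P (insert a (insert c S)) + P (insert b (insert d S)) =
        P (insert a (insert d S)) + P (insert b (insert c S)) ∧
      P (insert a (insert d S)) + P (insert b (insert c S)) ≤
        P (insert a (insert b S)) + P (insert c (insert d S))))

/-- The vertex set of the face of the regular subdivision `D_P` of `Δ_{k,n}`
selected by `λ ∈ ℝⁿ`: the `k`-subsets `I` maximizing `λ·e_I − P_I`. -/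
def faceBases (n k : ℕ) (P : Finset (Fin n) → ℝ) (lam : Fin n → ℝ) :
    Set (Finset (Fin n)) :=
  {I | I.card = k ∧ ∀ J : Finset (Fin n), J.card = k →
        (∑ i ∈ J, lam i) - P J ≤ (∑ i ∈ I, lam i) - P I}

/-!
For the direct implication, `P` is lifted to configurations `u s` of `n` vectors in `ℝᵏ` whose
Plücker coordinates at `J` are positive and asymptotic to `c e^{-s (P J - r)}` with `c > 0`. The
vectors are added one at a time. The Plücker coordinates containing a new last vector can be
prescribed freely on the sets `[1, lo] ∪ [hi, n]`, where they form a triangular linear system, and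
the three-term relation with `d` the last index then gives all the others: the tropical relation
is exactly what makes positivity and leading exponents match, with no cancellation. Divided by a
coordinate of least exponent, the Plücker coordinates converge to nonnegative numbers supported on
the minimizers of `P`, and the limit is again a vector of Plücker coordinates because the
Grassmannian is closed. Subtracting a linear functional from `P` yields every face of `D_P`.

For the converse, a linear functional shears the octahedron on `S` and `a, b, c, d` so that
opposite vertices have equal heights. The bases of the face that minimizes `P` on it are the
support of nonnegative Plücker coordinates, and the three-term relation among these shows that the
least height is reached by `ac, bd` exactly when it is reached by `ab, cd` or by `ad, bc`.
-/

/-! ### Plücker coordinates and three-term relations -/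

section SortedEval

variable {α R M N : Type*} [LinearOrder α] [CommRing R] [AddCommGroup M] [Module R M]
  [AddCommGroup N] [Module R N]

/-- The value of an alternating map on the members of the family `u` indexed by the finite set
`J`, listed in increasing order; the junk value `0` if `J` has the wrong number of elements. -/
def sortedEval {k : ℕ} (ω : M [⋀^Fin k]→ₗ[R] N) (u : α → M) (J : Finset α) : N :=
  if h : J.card = k then ω (u ∘ J.orderEmbOfFin h) else 0

theorem sortedEval_of_strictMono {k : ℕ} (ω : M [⋀^Fin k]→ₗ[R] N) (u : α → M) {J : Finset α}
    (hJ : J.card = k) {f : Fin k → α} (hf : StrictMono f) (hfJ : ∀ i, f i ∈ J) :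
    sortedEval ω u J = ω (u ∘ f) := by
  rw [sortedEval, dif_pos hJ, ← Finset.orderEmbOfFin_unique hJ hfJ hf]

theorem sortedEval_orderEmbOfFin {k : ℕ} (ω : M [⋀^Fin k]→ₗ[R] N) (u : α → M) {J : Finset α}
    (hJ : J.card = k) : sortedEval ω u J = ω (u ∘ J.orderEmbOfFin hJ) :=
  dif_pos hJ

theorem sortedEval_map {β : Type*} [LinearOrder β] {k : ℕ} (ω : M [⋀^Fin k]→ₗ[R] N) (u : β → M)
    {e : α ↪ β} (he : StrictMono e) (J : Finset α) :
    sortedEval ω u (J.map e) = sortedEval ω (u ∘ e) J := by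
  by_cases hJ : J.card = k
  · rw [sortedEval_orderEmbOfFin ω _ hJ]
    exact sortedEval_of_strictMono ω u (J.card_map e ▸ hJ)
      (he.comp (J.orderEmbOfFin hJ).strictMono)
      fun i => Finset.mem_map_of_mem e (J.orderEmbOfFin_mem hJ i)
  · rw [sortedEval, sortedEval, dif_neg hJ, dif_neg (J.card_map e ▸ hJ)]

theorem exists_sortedEval_image_eq_units_smul {k : ℕ} {f : Fin k → α}
    (hf : Function.Injective f) :
    ∃ ε : ℤˣ, ∀ (ω : M [⋀^Fin k]→ₗ[R] N) (u : α → M),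
      ω (u ∘ f) = ε • sortedEval ω u (Finset.univ.image f) := by
  set σ := Tuple.sort f
  have hmono : StrictMono (f ∘ σ) :=
    (Tuple.monotone_sort f).strictMono_of_injective (hf.comp σ.injective)
  refine ⟨Equiv.Perm.sign σ, fun ω u => ?_⟩
  rw [sortedEval_of_strictMono ω u (by simp [Finset.card_image_of_injective _ hf]) hmono
    fun i => by simp, ← Function.comp_assoc, ω.map_perm, smul_smul, Int.units_mul_self, one_smul]

theorem card_filter_lt_orderEmbOfFin {k : ℕ} {J : Finset α} (hJ : J.card = k) (i : Fin k) :
    (J.filter (· < J.orderEmbOfFin hJ i)).card = i := by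
  have hImage : J.filter (· < J.orderEmbOfFin hJ i) =
      (Finset.Iio i).map (J.orderEmbOfFin hJ).toEmbedding := by
    ext x
    rw [Finset.mem_filter, ← Finset.mem_coe, ← J.range_orderEmbOfFin hJ]
    constructor
    · rintro ⟨⟨j, rfl⟩, hj⟩
      simpa using hj
    · intro hx
      obtain ⟨j, hj, rfl⟩ := Finset.mem_map.mp hx
      simpa using hj
  rw [hImage, Finset.card_map, Fin.card_Iio]

/-- Expanding along `x` costs a sign that depends only on the rank of `x` in `S`. -/
theorem sortedEval_insert {m : ℕ} (ω : M [⋀^Fin (m + 1)]→ₗ[R] N) (u : α → M) {S : Finset α}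
    {x : α} (hx : x ∉ S) :
    sortedEval ω u (insert x S) =
      (-1 : ℤ) ^ (S.filter (· < x)).card • sortedEval (ω.curryLeft (u x)) u S := by
  by_cases hS : S.card = m
  · have hxS : (insert x S).card = m + 1 := by rw [Finset.card_insert_of_notMem hx, hS]
    obtain ⟨i, hi⟩ : x ∈ Set.range ((insert x S).orderEmbOfFin hxS) := by simp
    set f := (insert x S).orderEmbOfFin hxS
    have hmem (j : Fin m) : f (i.succAbove j) ∈ S := by
      refine Finset.mem_of_mem_insert_of_ne (Finset.orderEmbOfFin_mem _ hxS _) fun h => ?_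
      exact i.succAbove_ne j (f.injective (h.trans hi.symm))
    have hrank : (S.filter (· < x)).card = i := by
      rw [← card_filter_lt_orderEmbOfFin hxS i, hi, Finset.filter_insert, if_neg (lt_irrefl x)]
    have hinsert : u ∘ f = i.insertNth (u x) (u ∘ f ∘ i.succAbove) := by
      rw [Fin.eq_insertNth_iff, ← hi]
      exact ⟨rfl, rfl⟩
    rw [sortedEval_orderEmbOfFin ω u hxS, hinsert, ω.map_insertNth, hrank,
      sortedEval_of_strictMono _ u hS (f.strictMono.comp i.strictMono_succAbove) hmem,
      AlternatingMap.curryLeft_apply_apply]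
  · rw [sortedEval, sortedEval, dif_neg hS, smul_zero, dif_neg]
    rwa [Finset.card_insert_of_notMem hx, Nat.add_right_cancel_iff]

theorem sortedEval_insert_insert {m : ℕ} (ω : M [⋀^Fin (m + 2)]→ₗ[R] N) (u : α → M)
    {S : Finset α} {x y : α} (hxy : x < y) (hx : x ∉ S) (hy : y ∉ S) :
    sortedEval ω u (insert x (insert y S)) =
      ((-1 : ℤ) ^ (S.filter (· < x)).card * (-1) ^ (S.filter (· < y)).card) •
        sortedEval ((ω.curryLeft (u x)).curryLeft (u y)) u S := by
  rw [sortedEval_insert ω u (by simp [hxy.ne, hx]), sortedEval_insert _ u hy, smul_smul,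
    Finset.filter_insert, if_neg hxy.not_gt]

end SortedEval

section Pluecker

open Matrix

variable {α R : Type*} [LinearOrder α] [CommRing R]

/-- The Plücker coordinate at `J` of a configuration of vectors in `Rᵏ` indexed by a linear order,
that is, the maximal minor on the rows `J` of the matrix with rows `u j`; it is `0` if `J` does
not have `k` elements. -/
def pluecker {k : ℕ} (u : α → Fin k → R) (J : Finset α) : R :=
  sortedEval detRowAlternating u J

theorem pluecker_of_card_ne {k : ℕ} (u : α → Fin k → R) {J : Finset α} (hJ : J.card ≠ k) :
    pluecker u J = 0 :=
  dif_neg hJ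

theorem det_smul_eq_sum_det_updateRow {ι : Type*} [Fintype ι] [DecidableEq ι] (A : Matrix ι ι R)
    (c : ι → R) : A.det • c = ∑ i, (A.updateRow i c).det • A i := by
  have cramer_rule := mulVec_cramer Aᵀ c
  rw [det_transpose, mulVec_transpose, vecMul_eq_sum] at cramer_rule
  simp only [← cramer_rule, cramer_transpose_apply]

theorem det_three_term {m : ℕ} (a b c d : Fin (m + 2) → R) (g : Fin m → Fin (m + 2) → R) :
    (of (vecCons a (vecCons c g))).det * (of (vecCons b (vecCons d g))).det =
      (of (vecCons a (vecCons b g))).det * (of (vecCons c (vecCons d g))).det +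
      (of (vecCons a (vecCons d g))).det * (of (vecCons b (vecCons c g))).det := by
  have update_zero (x y z : Fin (m + 2) → R) :
      (of (vecCons x (vecCons y g))).updateRow 0 z = of (vecCons z (vecCons y g)) := by
    ext i
    refine Fin.cases ?_ (fun i => ?_) i <;> simp [updateRow_apply]
  have update_one (x y z : Fin (m + 2) → R) :
      (of (vecCons x (vecCons y g))).updateRow 1 z = of (vecCons x (vecCons z g)) := by
    ext i
    refine Fin.cases ?_ (Fin.cases ?_ fun i => ?_) i <;> simp [updateRow_apply, Fin.ext_iff]
  have repeated_row (j : Fin m) : (of (vecCons a (vecCons (g j) g))).det = 0 :=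
    det_zero_of_row_eq (i := 1) (j := j.succ.succ) (by simp [Fin.ext_iff]) rfl
  -- Apply the linear form `det (a, ·, g)` to Cramer's expansion of `c` along `b, d, g`.
  let L : (Fin (m + 2) → R) →ₗ[R] R := LinearMap.proj 1 ∘ₗ cramer (of (vecCons a (vecCons 0 g)))ᵀ
  have L_apply (x) : L x = (of (vecCons a (vecCons x g))).det := by
    simp only [L, LinearMap.comp_apply, LinearMap.proj_apply, cramer_transpose_apply, update_one]
  have L_zero : L (of (vecCons b (vecCons d g)) 0) = (of (vecCons a (vecCons b g))).det :=
    L_apply b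
  have L_one : L (of (vecCons b (vecCons d g)) 1) = (of (vecCons a (vecCons d g))).det :=
    L_apply d
  have L_succ_succ (j : Fin m) : L (of (vecCons b (vecCons d g)) j.succ.succ) = 0 :=
    (L_apply (g j)).trans (repeated_row j)
  have expansion := congrArg L (det_smul_eq_sum_det_updateRow (of (vecCons b (vecCons d g))) c)
  simp only [Fin.sum_univ_succ, Fin.succ_zero_eq_one, map_add, map_sum, map_smul, smul_eq_mul,
    update_zero, update_one, L_apply c, L_zero, L_one, L_succ_succ, mul_zero,
    Finset.sum_const_zero, add_zero] at expansion
  linear_combination expansion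

theorem pluecker_three_term {k : ℕ} (u : α → Fin k → R) {S : Finset α} (hS : S.card + 2 = k)
    {a b c d : α} (hab : a < b) (hbc : b < c) (hcd : c < d) (ha : a ∉ S) (hb : b ∉ S) (hc : c ∉ S)
    (hd : d ∉ S) :
    pluecker u (insert a (insert c S)) * pluecker u (insert b (insert d S)) =
      pluecker u (insert a (insert b S)) * pluecker u (insert c (insert d S)) +
      pluecker u (insert a (insert d S)) * pluecker u (insert b (insert c S)) := by
  subst hS
  set ε : α → ℤ := fun x => (-1) ^ (S.filter (· < x)).card
  set g : Fin S.card → Fin (S.card + 2) → R := u ∘ S.orderEmbOfFin rfl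
  have pluecker_eq {x y : α} (hxy : x < y) (hx : x ∉ S) (hy : y ∉ S) :
      pluecker u (insert x (insert y S)) =
        (ε x * ε y : ℤ) * (of (vecCons (u x) (vecCons (u y) g))).det := by
    rw [pluecker, sortedEval_insert_insert _ u hxy hx hy, sortedEval_orderEmbOfFin _ u rfl,
      zsmul_eq_mul]
    rfl
  rw [pluecker_eq (hab.trans hbc) ha hc, pluecker_eq (hbc.trans hcd) hb hd, pluecker_eq hab ha hb,
    pluecker_eq hcd hc hd, pluecker_eq (hab.trans (hbc.trans hcd)) ha hd, pluecker_eq hbc hb hc]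
  push_cast
  linear_combination (ε a * ε b * ε c * ε d : R) * det_three_term (u a) (u b) (u c) (u d) g

end Pluecker

/-! ### Extending a configuration by one vector -/

section Extension

open Matrix

variable {α R : Type*} [LinearOrder α] [CommRing R]

/-- The subset of `Fin n` made of the indices below `lo` and the indices from `hi` on.
Three-term relations propagate properties from these sets to all others of the same size. -/
def outerSet (n lo hi : ℕ) : Finset (Fin n) :=
  {x | (x : ℕ) < lo ∨ hi ≤ (x : ℕ)}

theorem mem_outerSet {n lo hi : ℕ} {x : Fin n} :
    x ∈ outerSet n lo hi ↔ (x : ℕ) < lo ∨ hi ≤ (x : ℕ) := by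
  simp [outerSet]

theorem card_outerSet {n lo hi : ℕ} (hlo : lo ≤ hi) (hhi : hi ≤ n) :
    (outerSet n lo hi).card = lo + (n - hi) := by
  have hcompl : (outerSet n lo hi)ᶜ =
      ({x | (x : ℕ) < hi} : Finset (Fin n)) \ ({x | (x : ℕ) < lo} : Finset (Fin n)) := by
    ext x
    simp [mem_outerSet, and_comm]
  have hcard := Finset.card_compl_add_card (outerSet n lo hi)
  rw [hcompl, Finset.card_sdiff_of_subset (by intro x; simp; omega), Fin.card_filter_val_lt,
    Fin.card_filter_val_lt, Fintype.card_fin] at hcard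
  omega

theorem outerSet_succ_left {n lo hi : ℕ} (hlo : lo < n) :
    outerSet n (lo + 1) hi = insert ⟨lo, hlo⟩ (outerSet n lo hi) := by
  ext x
  simp only [mem_outerSet, Finset.mem_insert, Fin.ext_iff]
  omega

theorem outerSet_eq_insert_right {n lo hi : ℕ} (hhi : hi < n) :
    outerSet n lo hi = insert ⟨hi, hhi⟩ (outerSet n lo (hi + 1)) := by
  ext x
  simp only [mem_outerSet, Finset.mem_insert, Fin.ext_iff]
  omega

/-- Exchanging an element of `J` in the window `[lo, hi]` for either end shrinks the window. -/
theorem exchange_window {n r lo hi : ℕ} (hle : lo ≤ hi) (hhi : hi < n) {p : Finset (Fin n) → Prop}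
    (exchange : ∀ S : Finset (Fin n), S.card + 1 = r → ∀ a b c, a < b → b < c →
      a ∉ S → b ∉ S → c ∉ S → p (insert a S) → p (insert c S) → p (insert b S))
    (outer : (outerSet n lo (hi + 1)).card = r → p (outerSet n lo (hi + 1)))
    (left : ∀ J, J.card = r → outerSet n (lo + 1) (hi + 1) ⊆ J → p J)
    (right : ∀ J, J.card = r → outerSet n lo hi ⊆ J → p J)
    {J : Finset (Fin n)} (hJ : J.card = r) (hsub : outerSet n lo (hi + 1) ⊆ J) : p J := by
  set a : Fin n := ⟨lo, hle.trans_lt hhi⟩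
  set c : Fin n := ⟨hi, hhi⟩
  have of_left_mem {I : Finset (Fin n)} (hI : I.card = r) (ha : a ∈ I)
      (hsub : outerSet n lo (hi + 1) ⊆ I) : p I :=
    left I hI (outerSet_succ_left (hle.trans_lt hhi) ▸ Finset.insert_subset ha hsub)
  have of_right_mem {I : Finset (Fin n)} (hI : I.card = r) (hc : c ∈ I)
      (hsub : outerSet n lo (hi + 1) ⊆ I) : p I :=
    right I hI (outerSet_eq_insert_right hhi ▸ Finset.insert_subset hc hsub)
  by_cases ha : a ∈ J
  · exact of_left_mem hJ ha hsub
  by_cases hc : c ∈ J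
  · exact of_right_mem hJ hc hsub
  by_cases hJouter : J ⊆ outerSet n lo (hi + 1)
  · exact hJouter.antisymm hsub ▸ outer (hJouter.antisymm hsub ▸ hJ)
  obtain ⟨b, hb, hbouter⟩ := Finset.not_subset.mp hJouter
  rw [mem_outerSet, not_or, not_lt, not_le, Nat.lt_succ_iff] at hbouter
  have hab : a < b := lt_of_le_of_ne hbouter.1 (ne_of_mem_of_not_mem hb ha).symm
  have hbc : b < c := lt_of_le_of_ne hbouter.2 (ne_of_mem_of_not_mem hb hc)
  have hcard : (J.erase b).card + 1 = r := by rw [Finset.card_erase_add_one hb, hJ]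
  have ha' : a ∉ J.erase b := mt Finset.mem_of_mem_erase ha
  have hc' : c ∉ J.erase b := mt Finset.mem_of_mem_erase hc
  have hsub' : outerSet n lo (hi + 1) ⊆ J.erase b :=
    Finset.subset_erase.mpr ⟨hsub, fun h => by have := mem_outerSet.mp h; omega⟩
  rw [← Finset.insert_erase hb]
  exact exchange _ hcard a b c hab hbc ha' (Finset.notMem_erase b J) hc'
    (of_left_mem (by rw [Finset.card_insert_of_notMem ha', hcard]) (Finset.mem_insert_self a _)
      (hsub'.trans (Finset.subset_insert a _)))
    (of_right_mem (by rw [Finset.card_insert_of_notMem hc', hcard]) (Finset.mem_insert_self c _)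
      (hsub'.trans (Finset.subset_insert c _)))

theorem exchange_induction {n r : ℕ} {p : Finset (Fin n) → Prop}
    (exchange : ∀ S : Finset (Fin n), S.card + 1 = r → ∀ a b c, a < b → b < c →
      a ∉ S → b ∉ S → c ∉ S → p (insert a S) → p (insert c S) → p (insert b S))
    (outer : ∀ lo hi, lo ≤ hi → hi ≤ n → (outerSet n lo hi).card = r → p (outerSet n lo hi))
    {J : Finset (Fin n)} (hJ : J.card = r) : p J := by
  suffices window : ∀ d lo hi, hi = lo + d → hi ≤ n → ∀ J : Finset (Fin n), J.card = r →
      outerSet n lo hi ⊆ J → p J from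
    window n 0 n (zero_add n).symm le_rfl J hJ fun x hx => by
      have := mem_outerSet.mp hx
      omega
  intro d
  induction d with
  | zero =>
    rintro _ hi rfl hhi J hJ hsub
    obtain rfl : J = outerSet n hi hi := hsub.antisymm' fun x _ => mem_outerSet.mpr (by omega)
    exact outer hi hi le_rfl hhi hJ
  | succ d ih =>
    rintro lo _ rfl hhi J hJ hsub
    exact exchange_window (Nat.le_add_right lo d) hhi exchange (outer _ _ (by omega) hhi)
      (ih _ _ (by omega) hhi) (ih _ _ rfl (by omega)) hJ hsub

theorem exists_forall_eq_of_triangular {ι K V : Type*} [Finite ι] [LinearOrder ι] [Field K]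
    [AddCommGroup V] [Module K V] (F : ι → V →ₗ[K] K) (w : ι → V)
    (hlower : ∀ i j, j < i → F i (w j) = 0) (hdiag : ∀ i, F i (w i) ≠ 0) (τ : ι → K) :
    ∃ v, ∀ i, F i v = τ i := by
  cases nonempty_fintype ι
  let T : Matrix ι ι K := of fun i j => F i (w j)
  have hT : T.IsUpperTriangular := fun i j => hlower i j
  have hdet : IsUnit T.det := by
    rw [det_of_isUpperTriangular hT]
    exact (Finset.prod_ne_zero_iff.mpr fun i _ => hdiag i).isUnit
  refine ⟨∑ j, (T⁻¹ *ᵥ τ) j • w j, fun i => ?_⟩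
  calc F i (∑ j, (T⁻¹ *ᵥ τ) j • w j) = (T *ᵥ (T⁻¹ *ᵥ τ)) i := by
        simp only [map_sum, map_smul, smul_eq_mul, mulVec, dotProduct, T, of_apply, mul_comm]
    _ = τ i := by rw [mulVec_mulVec, mul_nonsing_inv T hdet, one_mulVec]

/-- The linear form `v ↦ det (v, u_S)`, where the vectors `u x` with `x ∈ S` are listed in
increasing order; it is `0` if their number is not `m`. -/
def detForm {m : ℕ} (u : α → Fin (m + 1) → R) (S : Finset α) : (Fin (m + 1) → R) →ₗ[R] R where
  toFun v := sortedEval (detRowAlternating.curryLeft v) u S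
  map_add' v w := by
    unfold sortedEval
    split_ifs <;> simp
  map_smul' c v := by
    unfold sortedEval
    split_ifs <;> simp

theorem detForm_map {β : Type*} [LinearOrder β] {m : ℕ} (u : β → Fin (m + 1) → R) {e : α ↪ β}
    (he : StrictMono e) (S : Finset α) : detForm u (S.map e) = detForm (u ∘ e) S :=
  LinearMap.ext fun _ => sortedEval_map _ u he S

theorem detForm_of_mem {m : ℕ} (u : α → Fin (m + 1) → R) {S : Finset α} {x : α} (hx : x ∈ S) :
    detForm u S (u x) = 0 := by
  by_cases hS : S.card = m
  · obtain ⟨i, hi⟩ : x ∈ Set.range (S.orderEmbOfFin hS) := by simpa using hx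
    refine (sortedEval_orderEmbOfFin _ u hS).trans ?_
    exact detRowAlternating.map_eq_zero_of_eq (i := 0) (j := i.succ) _ (congrArg u hi.symm)
      (Fin.succ_ne_zero i).symm
  · exact dif_neg hS

theorem pluecker_insert {m : ℕ} (u : α → Fin (m + 1) → R) {S : Finset α} {x : α} (hx : x ∉ S) :
    pluecker u (insert x S) = (-1) ^ (S.filter (· < x)).card * detForm u S (u x) := by
  rw [pluecker, sortedEval_insert _ u hx, zsmul_eq_mul]
  push_cast
  rfl

theorem pluecker_snoc_map_castSucc {n k : ℕ} (u : Fin n → Fin k → R) (v : Fin k → R)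
    (J : Finset (Fin n)) :
    pluecker (Fin.snoc u v : Fin (n + 1) → Fin k → R) (J.map Fin.castSuccEmb) = pluecker u J := by
  rw [pluecker, sortedEval_map _ _ Fin.strictMono_castSucc]
  exact congrArg (sortedEval _ · J) (Fin.snoc_comp_castSucc (α := Fin k → R))

theorem last_notMem_map_castSucc {n : ℕ} (S : Finset (Fin n)) :
    Fin.last n ∉ S.map Fin.castSuccEmb := by
  simp [Fin.castSucc_ne_last]

theorem pluecker_snoc_insert_last {n m : ℕ} (u : Fin n → Fin (m + 1) → R) (v : Fin (m + 1) → R)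
    (S : Finset (Fin n)) :
    pluecker (Fin.snoc u v : Fin (n + 1) → Fin (m + 1) → R)
        (insert (Fin.last n) (S.map Fin.castSuccEmb)) = (-1) ^ S.card * detForm u S v := by
  rw [pluecker_insert _ (last_notMem_map_castSucc S), Fin.snoc_last,
    detForm_map _ Fin.strictMono_castSucc, Finset.filter_true_of_mem, Finset.card_map]
  · exact congrArg (fun w => (-1) ^ S.card * detForm w S v)
      (Fin.snoc_comp_castSucc (α := Fin (m + 1) → R))
  · simp [Fin.castSucc_lt_last]

/-- The prescribed coordinates form a triangular linear system for the new vector: `det (·, u_S)`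
vanishes on the members of `u_S`. -/
theorem exists_pluecker_snoc_outerSet {n k : ℕ} {K : Type*} [Field K] (hkn : k ≤ n)
    {u : Fin n → Fin k → K} (hu : ∀ J, J.card = k → pluecker u J ≠ 0)
    (τ : Finset (Fin n) → K) :
    ∃ v : Fin k → K, ∀ lo hi, lo ≤ hi → hi ≤ n → (outerSet n lo hi).card + 1 = k →
      pluecker (Fin.snoc u v : Fin (n + 1) → Fin k → K)
        (insert (Fin.last n) ((outerSet n lo hi).map Fin.castSuccEmb)) = τ (outerSet n lo hi) := by
  obtain _ | r := k
  · exact ⟨0, fun _ _ _ _ h => absurd h (Nat.succ_ne_zero _)⟩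
  let C (i : Fin (r + 1)) : Finset (Fin n) := outerSet n i (n - (r - i))
  obtain ⟨v, hv⟩ := exists_forall_eq_of_triangular (fun i => detForm u (C i))
    (fun j : Fin (r + 1) => u (j.castLE hkn))
    (fun i j hji => detForm_of_mem u (mem_outerSet.mpr (Or.inl hji)))
    (fun i => by
      have hi : i.castLE hkn ∉ C i := by
        rw [mem_outerSet, Fin.val_castLE]
        omega
      have hcard : (insert (i.castLE hkn) (C i)).card = r + 1 := by
        rw [Finset.card_insert_of_notMem hi, card_outerSet (by omega) (by omega)]
        omega
      exact right_ne_zero_of_mul (pluecker_insert u hi ▸ hu _ hcard))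
    (fun i => (-1) ^ r * τ (C i))
  refine ⟨v, fun lo hi hlo hhi hcard => ?_⟩
  have hsum := card_outerSet hlo hhi
  have hC : outerSet n lo hi = C ⟨lo, by omega⟩ := congrArg (outerSet n lo) (by simp; omega)
  rw [pluecker_snoc_insert_last, Nat.succ_injective hcard, hC, hv, ← mul_assoc, ← mul_pow,
    neg_one_mul, neg_neg, one_pow, one_mul]

end Extension

section Tropicalization

open Filter Topology

/-- `x s ∼ c e^{-s p}` as `s → ∞` for some `c > 0`: with `t = e^{-s}`, the positive function `x` has
valuation `p`. -/
def Tropicalizes (x : ℝ → ℝ) (p : ℝ) : Prop :=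
  (∀ s, 0 < x s) ∧ ∃ c > 0, Tendsto (fun s => x s * Real.exp (s * p)) atTop (𝓝 c)

theorem tropicalizes_exp (p : ℝ) : Tropicalizes (fun s => Real.exp (-(s * p))) p := by
  refine ⟨fun s => Real.exp_pos _, 1, one_pos, tendsto_const_nhds.congr fun s => ?_⟩
  rw [← Real.exp_add, neg_add_cancel, Real.exp_zero]

namespace Tropicalizes

variable {x y z w z' w' : ℝ → ℝ} {p q p₁ p₂ p₃ p₄ p₅ p₆ : ℝ}

theorem mul (hx : Tropicalizes x p) (hy : Tropicalizes y q) :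
    Tropicalizes (fun s => x s * y s) (p + q) := by
  obtain ⟨hx_pos, c, hc, hxc⟩ := hx
  obtain ⟨hy_pos, d, hd, hyd⟩ := hy
  refine ⟨fun s => mul_pos (hx_pos s) (hy_pos s), c * d, mul_pos hc hd,
    (hxc.mul hyd).congr fun s => ?_⟩
  rw [mul_add, Real.exp_add]
  ring

theorem inv (hx : Tropicalizes x p) : Tropicalizes (fun s => (x s)⁻¹) (-p) := by
  obtain ⟨hx_pos, c, hc, hxc⟩ := hx
  refine ⟨fun s => inv_pos.mpr (hx_pos s), c⁻¹, inv_pos.mpr hc, (hxc.inv₀ hc.ne').congr fun s => ?_⟩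
  rw [mul_inv, mul_neg, Real.exp_neg]

theorem exists_tendsto (hx : Tropicalizes x p) (hp : 0 ≤ p) :
    ∃ L, 0 ≤ L ∧ (L ≠ 0 ↔ p = 0) ∧ Tendsto x atTop (𝓝 L) := by
  obtain ⟨-, c, hc, hxc⟩ := hx
  obtain rfl | hp := hp.eq_or_lt
  · exact ⟨c, hc.le, by simpa using hc.ne', by simpa using hxc⟩
  · have hdecay : Tendsto (fun s => Real.exp (-(s * p))) atTop (𝓝 0) :=
      Real.tendsto_exp_neg_atTop_nhds_zero.comp (tendsto_id.atTop_mul_const hp)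
    refine ⟨0, le_rfl, by simpa using hp.ne', mul_zero c ▸ (hxc.mul hdecay).congr fun s => ?_⟩
    rw [mul_assoc, ← Real.exp_add, add_neg_cancel, Real.exp_zero, mul_one]

theorem add (hx : Tropicalizes x p) (hy : Tropicalizes y q) (hpq : p ≤ q) :
    Tropicalizes (fun s => x s + y s) p := by
  obtain ⟨L, hL, -, hyL⟩ := (hy.mul (tropicalizes_exp (-p))).exists_tendsto (by linarith)
  obtain ⟨hx_pos, c, hc, hxc⟩ := hx
  refine ⟨fun s => add_pos (hx_pos s) (hy.1 s), c + L, by positivity,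
    (hxc.add hyL).congr fun s => ?_⟩
  rw [mul_neg, neg_neg, add_mul]

theorem of_three_term (hx : Tropicalizes x p₁) (hz : Tropicalizes z p₃) (hw : Tropicalizes w p₄)
    (hz' : Tropicalizes z' p₅) (hw' : Tropicalizes w' p₆)
    (three_term : ∀ s, x s * y s = z s * w s + z' s * w' s)
    (tropical : (p₁ + p₂ = p₃ + p₄ ∧ p₃ + p₄ ≤ p₅ + p₆) ∨
      (p₁ + p₂ = p₅ + p₆ ∧ p₅ + p₆ ≤ p₃ + p₄)) : Tropicalizes y p₂ := by
  have hsum : Tropicalizes (fun s => z s * w s + z' s * w' s) (p₁ + p₂) := by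
    obtain ⟨h, hle⟩ | ⟨h, hle⟩ := tropical
    · exact h ▸ (hz.mul hw).add (hz'.mul hw') hle
    · simpa only [h, add_comm] using (hz'.mul hw').add (hz.mul hw) hle
  have hy : y = fun s => (x s)⁻¹ * (z s * w s + z' s * w' s) := by
    ext s
    rw [← three_term, inv_mul_cancel_left₀ (hx.1 s).ne']
  simpa only [hy, neg_add_cancel_left] using hx.inv.mul hsum

end Tropicalizes

end Tropicalization

/-! ### Lifting positive tropical Plücker vectors -/

section Family

theorem exists_map_castSucc_eq {n : ℕ} (J : Finset (Fin (n + 1))) :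
    ∃ I : Finset (Fin n),
      J = I.map Fin.castSuccEmb ∨ J = insert (Fin.last n) (I.map Fin.castSuccEmb) := by
  refine ⟨({i | Fin.castSucc i ∈ J} : Finset (Fin n)), ?_⟩
  by_cases hlast : Fin.last n ∈ J
  · right
    ext x
    cases x using Fin.lastCases <;> simp [hlast, Fin.castSucc_ne_last]
  · left
    ext x
    cases x using Fin.lastCases <;> simp [hlast, Fin.castSucc_ne_last]

theorem IsPosTropPluecker.map_castSucc {n k : ℕ} {P : Finset (Fin (n + 1)) → ℝ}
    (hP : IsPosTropPluecker (n + 1) k P) :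
    IsPosTropPluecker n k fun J => P (J.map Fin.castSuccEmb) := by
  intro S hS a b c d hab hbc hcd ha hb hc hd
  simp only [Finset.map_insert]
  exact hP (S.map Fin.castSuccEmb) (by rwa [Finset.card_map]) _ _ _ _ hab hbc hcd
    (by simpa using ha) (by simpa using hb) (by simpa using hc) (by simpa using hd)

theorem card_insert_insert {α : Type*} [DecidableEq α] {S : Finset α} {x y : α}
    (hxy : x ≠ y) (hx : x ∉ S) (hy : y ∉ S) :
    (insert x (insert y S)).card = S.card + 2 := by
  rw [Finset.card_insert_of_notMem (by simp [hxy, hx]), Finset.card_insert_of_notMem hy]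

theorem tropicalizes_pluecker_insert_last {n k : ℕ} {P : Finset (Fin (n + 1)) → ℝ}
    (hP : IsPosTropPluecker (n + 1) k P) {u : ℝ → Fin (n + 1) → Fin k → ℝ} {r : ℝ}
    (hmap : ∀ J : Finset (Fin n), J.card = k →
      Tropicalizes (fun s => pluecker (u s) (J.map Fin.castSuccEmb))
        (P (J.map Fin.castSuccEmb) - r))
    (houter : ∀ lo hi, lo ≤ hi → hi ≤ n → (outerSet n lo hi).card + 1 = k →
      Tropicalizes
        (fun s => pluecker (u s) (insert (Fin.last n) ((outerSet n lo hi).map Fin.castSuccEmb)))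
        (P (insert (Fin.last n) ((outerSet n lo hi).map Fin.castSuccEmb)) - r))
    {J : Finset (Fin n)} (hJ : J.card + 1 = k) :
    Tropicalizes (fun s => pluecker (u s) (insert (Fin.last n) (J.map Fin.castSuccEmb)))
      (P (insert (Fin.last n) (J.map Fin.castSuccEmb)) - r) := by
  refine exchange_induction (r := J.card)
    (p := fun J => Tropicalizes
      (fun s => pluecker (u s) (insert (Fin.last n) (J.map Fin.castSuccEmb)))
      (P (insert (Fin.last n) (J.map Fin.castSuccEmb)) - r))
    ?_ (fun lo hi hlo hhi hcard => houter lo hi hlo hhi (hcard ▸ hJ)) rfl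
  intro S hS a b c hab hbc ha hb hc hTa hTc
  have hS' : (S.map Fin.castSuccEmb).card + 2 = k := by rw [Finset.card_map]; omega
  have ha' : a.castSucc ∉ S.map Fin.castSuccEmb := by simpa using ha
  have hb' : b.castSucc ∉ S.map Fin.castSuccEmb := by simpa using hb
  have hc' : c.castSucc ∉ S.map Fin.castSuccEmb := by simpa using hc
  have hlast := last_notMem_map_castSucc S
  have known {x y : Fin n} (hxy : x < y) (hx : x ∉ S) (hy : y ∉ S) :
      Tropicalizes
        (fun s => pluecker (u s) (insert x.castSucc (insert y.castSucc (S.map Fin.castSuccEmb))))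
        (P (insert x.castSucc (insert y.castSucc (S.map Fin.castSuccEmb))) - r) := by
    have hcard : (insert x (insert y S)).card = k :=
      (card_insert_insert hxy.ne hx hy).trans (by omega)
    simpa only [Finset.map_insert, Fin.coe_castSuccEmb] using hmap _ hcard
  simp only [Finset.map_insert, Fin.coe_castSuccEmb, Finset.insert_comm (Fin.last n)]
    at hTa hTc ⊢
  refine (known (hab.trans hbc) ha hc).of_three_term (known hab ha hb) hTc hTa (known hbc hb hc)
    (fun s => pluecker_three_term (u s) hS' hab hbc c.castSucc_lt_last ha' hb' hc' hlast) ?_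
  refine (hP _ hS' _ _ _ _ hab hbc c.castSucc_lt_last ha' hb' hc' hlast).imp ?_ ?_ <;>
    rintro ⟨heq, hle⟩ <;> constructor <;> linarith

theorem IsPosTropPluecker.exists_family {n k : ℕ} (hkn : k ≤ n) {P : Finset (Fin n) → ℝ}
    (hP : IsPosTropPluecker n k P) :
    ∃ (u : ℝ → Fin n → Fin k → ℝ) (r : ℝ), ∀ J, J.card = k →
      Tropicalizes (fun s => pluecker (u s) J) (P J - r) := by
  induction n, hkn using Nat.le_induction with
  | base =>
    refine ⟨fun _ => (1 : Matrix (Fin k) (Fin k) ℝ), P Finset.univ, fun J hJ => ?_⟩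
    obtain rfl : J = Finset.univ := by rwa [← Finset.card_eq_iff_eq_univ, Fintype.card_fin]
    have hone : pluecker (1 : Matrix (Fin k) (Fin k) ℝ) Finset.univ = 1 :=
      (sortedEval_of_strictMono _ _ hJ strictMono_id fun i => Finset.mem_univ i).trans
        Matrix.det_one
    simpa [hone] using tropicalizes_exp 0
  | succ n hkn ih =>
    obtain ⟨u, r, hu⟩ := ih hP.map_castSucc
    have hu_ne (s : ℝ) (J : Finset (Fin n)) (hJ : J.card = k) : pluecker (u s) J ≠ 0 :=
      ((hu J hJ).1 s).ne'
    choose v hv using fun s => exists_pluecker_snoc_outerSet hkn (hu_ne s) fun J =>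
      Real.exp (-(s * (P (insert (Fin.last n) (J.map Fin.castSuccEmb)) - r)))
    have hmap (J : Finset (Fin n)) (hJ : J.card = k) : Tropicalizes
        (fun s => pluecker (Fin.snoc (u s) (v s) : Fin (n + 1) → Fin k → ℝ)
          (J.map Fin.castSuccEmb)) (P (J.map Fin.castSuccEmb) - r) := by
      simpa only [pluecker_snoc_map_castSucc] using hu J hJ
    refine ⟨fun s => Fin.snoc (u s) (v s), r, fun J hJ => ?_⟩
    obtain ⟨I, rfl | rfl⟩ := exists_map_castSucc_eq J
    · exact hmap I (by rwa [Finset.card_map] at hJ)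
    · refine tropicalizes_pluecker_insert_last hP hmap (fun lo hi hlo hhi hcard => ?_) ?_
      · simpa only [hv _ lo hi hlo hhi hcard] using tropicalizes_exp _
      · rwa [Finset.card_insert_of_notMem (last_notMem_map_castSucc I), Finset.card_map] at hJ

end Family

/-! ### Limits of Plücker coordinates -/

section Limit

open Filter Topology Matrix

variable {α K : Type*} [Field K] {k : ℕ}

/-- The coordinates of the vectors `u j` in the basis `u ∘ f`, given by Cramer's rule; they are `0`
if `u ∘ f` is not a basis. -/
def chart (u : α → Fin k → K) (f : Fin k → α) (j : α) (i : Fin k) : K :=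
  detRowAlternating (u ∘ Function.update f i j) / detRowAlternating (u ∘ f)

theorem sum_chart_smul {u : α → Fin k → K} {f : Fin k → α} (hf : detRowAlternating (u ∘ f) ≠ 0)
    (j : α) : ∑ i, chart u f j i • u (f i) = u j := by
  refine smul_right_injective _ hf ?_
  refine Eq.trans ?_ (det_smul_eq_sum_det_updateRow (of (u ∘ f)) (u j)).symm
  simp only [Finset.smul_sum, smul_smul, chart, mul_div_cancel₀ _ hf, Function.comp_update]
  rfl

variable [LinearOrder α]

theorem card_eq_of_pluecker_ne_zero {u : α → Fin k → K} {J : Finset α} (hJ : pluecker u J ≠ 0) :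
    J.card = k :=
  not_imp_comm.mp (pluecker_of_card_ne u) hJ

theorem pluecker_chart {u : α → Fin k → K} {f : Fin k → α}
    (hf : detRowAlternating (u ∘ f) ≠ 0) (J : Finset α) :
    pluecker (chart u f) J = pluecker u J / detRowAlternating (u ∘ f) := by
  by_cases hJ : J.card = k
  · have hmul : of (u ∘ J.orderEmbOfFin hJ) =
        of (chart u f ∘ J.orderEmbOfFin hJ) * of (u ∘ f) := by
      ext i l
      simp [mul_apply, ← sum_chart_smul hf (J.orderEmbOfFin hJ i)]
    rw [eq_div_iff hf, pluecker, pluecker, sortedEval_orderEmbOfFin _ _ hJ,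
      sortedEval_orderEmbOfFin _ _ hJ]
    exact ((congrArg det hmul).trans (det_mul _ _)).symm
  · rw [pluecker_of_card_ne _ hJ, pluecker_of_card_ne _ hJ, zero_div]

variable [TopologicalSpace K] [IsTopologicalRing K]

theorem continuous_pluecker (J : Finset α) :
    Continuous fun u : α → Fin k → K => pluecker u J := by
  unfold pluecker sortedEval
  split_ifs
  · exact Continuous.matrix_det (continuous_pi fun i => continuous_apply _)
  · exact continuous_const

theorem exists_tendsto_det_div {ι : Type*} {l : Filter ι} {u : ι → α → Fin k → K} {q : ι → K}
    {L : Finset α → K}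
    (hL : ∀ J, J.card = k → Tendsto (fun s => pluecker (u s) J / q s) l (𝓝 (L J)))
    (f : Fin k → α) :
    ∃ c, Tendsto (fun s => detRowAlternating (u s ∘ f) / q s) l (𝓝 c) := by
  by_cases hf : Function.Injective f
  · obtain ⟨ε, hε⟩ := exists_sortedEval_image_eq_units_smul (R := K) (M := Fin k → K) (N := K) hf
    refine ⟨(ε : ℤ) • L (Finset.univ.image f), ?_⟩
    have hcard : (Finset.univ.image f).card = k := by simp [Finset.card_image_of_injective _ hf]
    simp only [hε, zsmul_eq_mul, Units.smul_def, mul_div_assoc]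
    exact (hL _ hcard).const_mul _
  · obtain ⟨i, j, hij, hne⟩ := Function.not_injective_iff.mp hf
    refine ⟨0, tendsto_const_nhds.congr fun s => ?_⟩
    rw [detRowAlternating.map_eq_zero_of_eq _ (congrArg (u s) hij) hne, zero_div]

/-- The Grassmannian is closed: in the affine chart where the `J₀`-th coordinate is `1`, the
entries of a configuration are themselves Plücker coordinates up to sign. -/
theorem exists_pluecker_eq_of_tendsto [T2Space K] {ι : Type*} {l : Filter ι} [l.NeBot]
    {u : ι → α → Fin k → K} {J₀ : Finset α} (hJ₀ : ∀ s, pluecker (u s) J₀ ≠ 0)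
    {L : Finset α → K} (hL : ∀ J, J.card = k →
      Tendsto (fun s => pluecker (u s) J / pluecker (u s) J₀) l (𝓝 (L J))) :
    ∃ v : α → Fin k → K, ∀ J, J.card = k → pluecker v J = L J := by
  have hcard : J₀.card = k := (‹l.NeBot›.nonempty).elim fun s => card_eq_of_pluecker_ne_zero (hJ₀ s)
  have hdet (s : ι) : detRowAlternating (u s ∘ J₀.orderEmbOfFin hcard) = pluecker (u s) J₀ :=
    (sortedEval_orderEmbOfFin _ _ hcard).symm
  choose v hv using fun j i =>
    exists_tendsto_det_div hL (Function.update (J₀.orderEmbOfFin hcard) i j)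
  refine ⟨v, fun J hJ => tendsto_nhds_unique ?_ (hL J hJ)⟩
  have hchart : Tendsto (fun s => chart (u s) (J₀.orderEmbOfFin hcard)) l (𝓝 v) := by
    simp only [tendsto_pi_nhds, chart, hdet]
    exact hv
  refine (((continuous_pluecker J).tendsto v).comp hchart).congr fun s => ?_
  rw [Function.comp_apply, pluecker_chart (hdet s ▸ hJ₀ s), hdet]

end Limit

/-! ### Positroidal faces -/

section PosTropThreeTerm

variable {α : Type*}

theorem sum_insert_insert [DecidableEq α] (μ : α → ℝ) {S : Finset α} {x y : α} (hxy : x ≠ y)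
    (hx : x ∉ S) (hy : y ∉ S) :
    ∑ i ∈ insert x (insert y S), μ i = μ x + (μ y + ∑ i ∈ S, μ i) := by
  rw [Finset.sum_insert (by simp [hxy, hx]), Finset.sum_insert hy]

/-- The relation that `IsPosTropPluecker` imposes on `P` for each `S` and `a < b < c < d`. -/
def PosTropThreeTerm [DecidableEq α] (P : Finset α → ℝ) (S : Finset α) (a b c d : α) : Prop :=
  (P (insert a (insert c S)) + P (insert b (insert d S)) =
      P (insert a (insert b S)) + P (insert c (insert d S)) ∧
    P (insert a (insert b S)) + P (insert c (insert d S)) ≤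
      P (insert a (insert d S)) + P (insert b (insert c S))) ∨
  (P (insert a (insert c S)) + P (insert b (insert d S)) =
      P (insert a (insert d S)) + P (insert b (insert c S)) ∧
    P (insert a (insert d S)) + P (insert b (insert c S)) ≤
      P (insert a (insert b S)) + P (insert c (insert d S)))

variable [LinearOrder α] {P : Finset α → ℝ} {S : Finset α} {a b c d : α}

theorem posTropThreeTerm_sub_sum (μ : α → ℝ) (hab : a < b) (hbc : b < c) (hcd : c < d)
    (ha : a ∉ S) (hb : b ∉ S) (hc : c ∉ S) (hd : d ∉ S) :
    PosTropThreeTerm (fun J => P J - ∑ i ∈ J, μ i) S a b c d ↔ PosTropThreeTerm P S a b c d := by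
  have hac := hab.trans hbc
  unfold PosTropThreeTerm
  beta_reduce
  rw [sum_insert_insert μ hac.ne ha hc, sum_insert_insert μ (hbc.trans hcd).ne hb hd,
    sum_insert_insert μ hab.ne ha hb, sum_insert_insert μ hcd.ne hc hd,
    sum_insert_insert μ (hac.trans hcd).ne ha hd, sum_insert_insert μ hbc.ne hb hc]
  refine or_congr (and_congr ?_ ?_) (and_congr ?_ ?_) <;> constructor <;> intro <;> linarith

/-- The octahedron on `S` and `a, b, c, d` can be sheared so that opposite vertices get equal
heights. -/
theorem exists_sub_sum_eq_sub_sum (P : Finset α → ℝ) (hab : a < b) (hbc : b < c) (hcd : c < d)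
    (ha : a ∉ S) (hb : b ∉ S) (hc : c ∉ S) (hd : d ∉ S) :
    ∃ μ : α → ℝ,
      P (insert a (insert b S)) - ∑ i ∈ insert a (insert b S), μ i =
        P (insert c (insert d S)) - ∑ i ∈ insert c (insert d S), μ i ∧
      P (insert a (insert c S)) - ∑ i ∈ insert a (insert c S), μ i =
        P (insert b (insert d S)) - ∑ i ∈ insert b (insert d S), μ i ∧
      P (insert a (insert d S)) - ∑ i ∈ insert a (insert d S), μ i =
        P (insert b (insert c S)) - ∑ i ∈ insert b (insert c S), μ i := by
  have hac := hab.trans hbc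
  have hbd := hbc.trans hcd
  have had := hac.trans hcd
  set B := P (insert a (insert b S)) - P (insert c (insert d S))
  set C := P (insert a (insert c S)) - P (insert b (insert d S))
  set D := P (insert a (insert d S)) - P (insert b (insert c S))
  let μ : α → ℝ := Pi.single a ((B + C) / 2) + Pi.single b ((B - D) / 2) +
    Pi.single c ((C - D) / 2)
  have hμa : μ a = (B + C) / 2 := by simp [μ, hab.ne', hac.ne']
  have hμb : μ b = (B - D) / 2 := by simp [μ, hab.ne, hbc.ne']
  have hμc : μ c = (C - D) / 2 := by simp [μ, hac.ne, hbc.ne]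
  have hμd : μ d = 0 := by simp [μ, had.ne', hbd.ne', hcd.ne']
  refine ⟨μ, ?_⟩
  rw [sum_insert_insert μ hac.ne ha hc, sum_insert_insert μ hbd.ne hb hd,
    sum_insert_insert μ hab.ne ha hb, sum_insert_insert μ hcd.ne hc hd,
    sum_insert_insert μ had.ne ha hd, sum_insert_insert μ hbc.ne hb hc, hμa, hμb, hμc, hμd]
  refine ⟨?_, ?_, ?_⟩ <;> linarith

end PosTropThreeTerm

section Positroid

open Filter Topology Matrix

variable {n k : ℕ} {P : Finset (Fin n) → ℝ}

theorem minor_eq_pluecker (A : Matrix (Fin k) (Fin n) ℝ) (J : Finset (Fin n)) :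
    minor k n A J = pluecker Aᵀ J := by
  unfold minor pluecker sortedEval
  split_ifs
  · rw [← det_transpose]
    rfl
  · rfl

theorem rank_eq_of_minor_ne_zero {A : Matrix (Fin k) (Fin n) ℝ} {J : Finset (Fin n)}
    (hJ : minor k n A J ≠ 0) : A.rank = k := by
  unfold minor at hJ
  split_ifs at hJ with hcard
  · refine le_antisymm (A.rank_le_card_height.trans_eq (Fintype.card_fin k)) ?_
    have hsub := A.rank_submatrix_le id fun j : Fin k => (J.orderIsoOfFin hcard j : Fin n)
    rwa [rank_of_isUnit _ ((isUnit_iff_isUnit_det _).mpr hJ.isUnit), Fintype.card_fin] at hsub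
  · exact absurd rfl hJ

theorem isPositroid_of_pluecker {𝓑 : Set (Finset (Fin n))} {v : Fin n → Fin k → ℝ}
    (hnonneg : ∀ J, J.card = k → 0 ≤ pluecker v J)
    (hmem : ∀ J, J.card = k → (J ∈ 𝓑 ↔ pluecker v J ≠ 0)) {J₀ : Finset (Fin n)}
    (hJ₀ : J₀.card = k) (hJ₀_mem : J₀ ∈ 𝓑) : IsPositroid n k 𝓑 := by
  have hminor (J : Finset (Fin n)) : minor k n (of v)ᵀ J = pluecker v J :=
    minor_eq_pluecker _ J
  refine ⟨(of v)ᵀ, rank_eq_of_minor_ne_zero (hminor J₀ ▸ (hmem J₀ hJ₀).mp hJ₀_mem),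
    fun J => ?_, fun J hJ => hminor J ▸ hmem J hJ⟩
  rw [hminor]
  by_cases hJ : J.card = k
  · exact hnonneg J hJ
  · exact (pluecker_of_card_ne v hJ).ge

theorem IsPosTropPluecker.isPositroid_minimizers (hkn : k ≤ n) (hP : IsPosTropPluecker n k P) :
    IsPositroid n k {I | I.card = k ∧ ∀ J, J.card = k → P I ≤ P J} := by
  obtain ⟨u, r, hu⟩ := hP.exists_family hkn
  obtain ⟨J₀, hJ₀, hmin⟩ := (Finset.univ.powersetCard k).exists_min_image P
    (Finset.powersetCard_nonempty.mpr (by simpa using hkn))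
  simp only [Finset.mem_powersetCard_univ] at hJ₀ hmin
  have hratio (J : Finset (Fin n)) (hJ : J.card = k) :
      Tropicalizes (fun s => pluecker (u s) J / pluecker (u s) J₀) (P J - P J₀) := by
    simpa only [div_eq_mul_inv, ← sub_eq_add_neg, sub_sub_sub_cancel_right] using
      (hu J hJ).mul (hu J₀ hJ₀).inv
  choose! L hL_nonneg hL_ne hL using fun J hJ =>
    (hratio J hJ).exists_tendsto (sub_nonneg.mpr (hmin J hJ))
  obtain ⟨v, hv⟩ := exists_pluecker_eq_of_tendsto (fun s => ((hu J₀ hJ₀).1 s).ne') hL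
  refine isPositroid_of_pluecker (v := v) (fun J hJ => hv J hJ ▸ hL_nonneg J hJ)
    (fun J hJ => ?_) hJ₀ ⟨hJ₀, hmin⟩
  rw [hv J hJ, hL_ne J hJ, sub_eq_zero]
  exact ⟨fun h => (h.2 J₀ hJ₀).antisymm (hmin J hJ),
    fun h => ⟨hJ, fun I hI => h.trans_le (hmin I hI)⟩⟩

theorem IsPosTropPluecker.sub_sum (hP : IsPosTropPluecker n k P) (lam : Fin n → ℝ) :
    IsPosTropPluecker n k fun J => P J - ∑ i ∈ J, lam i :=
  fun S hS a b c d hab hbc hcd ha hb hc hd =>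
    (posTropThreeTerm_sub_sum lam hab hbc hcd ha hb hc hd).mpr
      (hP S hS a b c d hab hbc hcd ha hb hc hd)

theorem faceBases_eq (lam : Fin n → ℝ) :
    faceBases n k P lam =
      {I | I.card = k ∧ ∀ J, J.card = k → P I - ∑ i ∈ I, lam i ≤ P J - ∑ i ∈ J, lam i} := by
  ext I
  simp only [faceBases, Set.mem_ofPred_eq, ← neg_sub (P _), neg_le_neg_iff]

theorem IsPosTropPluecker.isPositroid_faceBases (hkn : k ≤ n) (hP : IsPosTropPluecker n k P)
    (lam : Fin n → ℝ) : IsPositroid n k (faceBases n k P lam) := by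
  rw [faceBases_eq]
  exact (hP.sub_sum lam).isPositroid_minimizers hkn

end Positroid

/-! ### Positroidal faces force the three-term relations -/

section Converse

section IntervalWeight

variable {α : Type*} [DecidableEq α]

/-- A linear functional on sets whose maximizers are the sets `J` with `S ⊆ J ⊆ T`. -/
def intervalWeight (S T : Finset α) (x : α) : ℝ :=
  (if x ∈ S then 1 else 0) - if x ∉ T then 1 else 0

variable {S T J : Finset α}

theorem sum_intervalWeight (S T J : Finset α) :
    ∑ i ∈ J, intervalWeight S T i = ((J ∩ S).card : ℝ) - (J \ T).card := by
  simp only [intervalWeight]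
  rw [Finset.sum_sub_distrib, Finset.sum_boole, Finset.sum_boole, Finset.filter_mem_eq_inter,
    ← Finset.sdiff_eq_filter]

theorem sum_intervalWeight_of_mem_Icc (hJ : J ∈ Set.Icc S T) :
    ∑ i ∈ J, intervalWeight S T i = S.card := by
  rw [sum_intervalWeight, Finset.inter_eq_right.mpr hJ.1, Finset.sdiff_eq_empty_iff_subset.mpr hJ.2,
    Finset.card_empty, Nat.cast_zero, sub_zero]

theorem sum_intervalWeight_add_one_le_of_notMem_Icc (hJ : J ∉ Set.Icc S T) :
    ∑ i ∈ J, intervalWeight S T i + 1 ≤ S.card := by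
  have hinter : (J ∩ S).card ≤ S.card := Finset.card_le_card Finset.inter_subset_right
  have hcard : (J ∩ S).card + 1 ≤ S.card + (J \ T).card := by
    by_cases hS : S ⊆ J
    · have : 0 < (J \ T).card :=
        Finset.card_pos.mpr (Finset.sdiff_nonempty.mpr fun hT => hJ ⟨hS, hT⟩)
      omega
    · have : (J ∩ S).card < S.card := Finset.card_lt_card
        (Finset.inter_subset_right.ssubset_of_ne fun h => hS (Finset.inter_eq_right.mp h))
      omega
  rw [sum_intervalWeight]
  have : ((J ∩ S).card : ℝ) + 1 ≤ S.card + (J \ T).card := mod_cast hcard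
  linarith

end IntervalWeight

variable {n k : ℕ} {P : Finset (Fin n) → ℝ}

theorem exists_mem_faceBases_iff_of_mem_Icc (k : ℕ) (P : Finset (Fin n) → ℝ)
    (S T : Finset (Fin n)) :
    ∃ lam : Fin n → ℝ, ∀ I ∈ Set.Icc S T, I.card = k →
      (I ∈ faceBases n k P lam ↔ ∀ J ∈ Set.Icc S T, J.card = k → P I ≤ P J) := by
  obtain ⟨M, hM⟩ := (Set.finite_range fun p : Finset (Fin n) × Finset (Fin n) =>
    P p.1 - P p.2).bddAbove
  have hsub_le (I J : Finset (Fin n)) : P I - P J ≤ M := hM ⟨(I, J), rfl⟩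
  have hM_nonneg : 0 ≤ M := by simpa using hsub_le ∅ ∅
  refine ⟨fun i => M * intervalWeight S T i, fun I hI hcard => ?_⟩
  simp only [faceBases_eq, Set.mem_ofPred_eq, hcard, true_and, ← Finset.mul_sum,
    sum_intervalWeight_of_mem_Icc hI]
  refine forall_congr' fun J => ?_
  by_cases hJ : J ∈ Set.Icc S T
  · simp only [sum_intervalWeight_of_mem_Icc hJ, hJ, sub_le_sub_iff_right, forall_const]
  · have := mul_le_mul_of_nonneg_left (sum_intervalWeight_add_one_le_of_notMem_Icc hJ) hM_nonneg
    exact iff_of_true (fun _ => by linarith [hsub_le I J]) fun h => absurd h hJ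

theorem eq_insert_insert_of_mem_Icc {α : Type*} [DecidableEq α] {S J : Finset α} {a b c d : α}
    (hJ : J ∈ Set.Icc S (insert a (insert b (insert c (insert d S)))))
    (hcard : J.card = S.card + 2) :
    J = insert a (insert b S) ∨ J = insert c (insert d S) ∨ J = insert a (insert c S) ∨
      J = insert b (insert d S) ∨ J = insert a (insert d S) ∨ J = insert b (insert c S) := by
  obtain ⟨x, y, hxy, hdiff⟩ : ∃ x y, x ≠ y ∧ J \ S = {x, y} := Finset.card_eq_two.mp (by
    rw [Finset.card_sdiff_of_subset hJ.1]
    omega)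
  obtain rfl : J = insert x (insert y S) := by
    rw [← Finset.sdiff_union_of_subset hJ.1, hdiff, Finset.insert_union, Finset.singleton_union]
  have hmem (z : α) (hz : z ∈ insert x (insert y S) \ S) : z = a ∨ z = b ∨ z = c ∨ z = d := by
    obtain ⟨hzJ, hzS⟩ := Finset.mem_sdiff.mp hz
    simpa [hzS] using hJ.2 hzJ
  obtain rfl | rfl | rfl | rfl := hmem x (by simp [hdiff]) <;>
    obtain rfl | rfl | rfl | rfl := hmem y (by simp [hdiff]) <;>
    first
    | exact absurd rfl hxy
    | simp only [true_or, or_true]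
    | simp only [Finset.insert_comm y, true_or, or_true]

theorem mem_Icc_and_card_eq_iff {α : Type*} [LinearOrder α] {S : Finset α} {a b c d : α}
    (hab : a < b) (hbc : b < c) (hcd : c < d) (ha : a ∉ S) (hb : b ∉ S) (hc : c ∉ S)
    (hd : d ∉ S) (J : Finset α) :
    J ∈ Set.Icc S (insert a (insert b (insert c (insert d S)))) ∧ J.card = S.card + 2 ↔
      J = insert a (insert b S) ∨ J = insert c (insert d S) ∨ J = insert a (insert c S) ∨
        J = insert b (insert d S) ∨ J = insert a (insert d S) ∨ J = insert b (insert c S) := by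
  refine ⟨fun h => eq_insert_insert_of_mem_Icc h.1 h.2, ?_⟩
  have hac := hab.trans hbc
  have hbd := hbc.trans hcd
  have mem_Icc {x y : α} (hx : x ∈ insert a (insert b (insert c (insert d S))))
      (hy : y ∈ insert a (insert b (insert c (insert d S)))) :
      insert x (insert y S) ∈ Set.Icc S (insert a (insert b (insert c (insert d S)))) := by
    refine ⟨by grind, ?_⟩
    exact Finset.insert_subset hx (Finset.insert_subset hy (by grind))
  rintro (rfl | rfl | rfl | rfl | rfl | rfl) <;> refine ⟨mem_Icc (by simp) (by simp), ?_⟩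
  · exact card_insert_insert hab.ne ha hb
  · exact card_insert_insert hcd.ne hc hd
  · exact card_insert_insert hac.ne ha hc
  · exact card_insert_insert hbd.ne hb hd
  · exact card_insert_insert (hac.trans hcd).ne ha hd
  · exact card_insert_insert hbc.ne hb hc

theorem eq_and_le_or_eq_and_le_of_le_and_le_iff {α : Type*} [LinearOrder α] {x y z : α}
    (h : y ≤ x ∧ y ≤ z ↔ x ≤ y ∧ x ≤ z ∨ z ≤ x ∧ z ≤ y) :
    y = x ∧ x ≤ z ∨ y = z ∧ z ≤ x := by
  grind

theorem posTropThreeTerm_of_balanced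
    (hfaces : ∀ lam : Fin n → ℝ, IsPositroid n k (faceBases n k P lam))
    {S : Finset (Fin n)} (hS : S.card + 2 = k) {a b c d : Fin n} (hab : a < b) (hbc : b < c)
    (hcd : c < d) (ha : a ∉ S) (hb : b ∉ S) (hc : c ∉ S) (hd : d ∉ S)
    (hab_cd : P (insert a (insert b S)) = P (insert c (insert d S)))
    (hac_bd : P (insert a (insert c S)) = P (insert b (insert d S)))
    (had_bc : P (insert a (insert d S)) = P (insert b (insert c S))) :
    PosTropThreeTerm P S a b c d := by
  subst hS
  have octahedron := mem_Icc_and_card_eq_iff hab hbc hcd ha hb hc hd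
  obtain ⟨lam, hlam⟩ := exists_mem_faceBases_iff_of_mem_Icc (S.card + 2) P S
    (insert a (insert b (insert c (insert d S))))
  obtain ⟨A, -, hnonneg, hsupport⟩ := hfaces lam
  simp only [minor_eq_pluecker] at hnonneg hsupport
  have ne_zero_iff {I : Finset (Fin n)} (hI : I = insert a (insert b S) ∨
      I = insert c (insert d S) ∨ I = insert a (insert c S) ∨ I = insert b (insert d S) ∨
      I = insert a (insert d S) ∨ I = insert b (insert c S)) :
      pluecker A.transpose I ≠ 0 ↔ P I ≤ P (insert c (insert d S)) ∧
        P I ≤ P (insert b (insert d S)) ∧ P I ≤ P (insert b (insert c S)) := by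
    obtain ⟨hIcc, hcard⟩ := (octahedron I).mpr hI
    rw [← hsupport I hcard, hlam I hIcc hcard]
    simp only [← and_imp, octahedron, forall_eq_or_imp, forall_eq, hab_cd, hac_bd, had_bc,
      and_self_left, and_self]
  have three_term := pluecker_three_term A.transpose rfl hab hbc hcd ha hb hc hd
  have three_term_support := not_congr (three_term ▸ add_eq_zero_iff_of_nonneg
    (mul_nonneg (hnonneg (insert a (insert b S))) (hnonneg (insert c (insert d S))))
    (mul_nonneg (hnonneg (insert a (insert d S))) (hnonneg (insert b (insert c S)))))
  rw [not_and_or, ← ne_eq, ← ne_eq, ← ne_eq, mul_ne_zero_iff, mul_ne_zero_iff, mul_ne_zero_iff,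
    ne_zero_iff (by simp), ne_zero_iff (by simp), ne_zero_iff (by simp), ne_zero_iff (by simp),
    ne_zero_iff (by simp), ne_zero_iff (by simp), hab_cd, hac_bd, had_bc] at three_term_support
  simp only [le_refl, true_and, and_true, and_self] at three_term_support
  unfold PosTropThreeTerm
  rw [hab_cd, hac_bd, had_bc]
  exact (eq_and_le_or_eq_and_le_of_le_and_le_iff three_term_support).imp
    (fun h => ⟨by rw [h.1], add_le_add h.2 h.2⟩) fun h => ⟨by rw [h.1], add_le_add h.2 h.2⟩

theorem isPosTropPluecker_of_isPositroid_faceBases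
    (hfaces : ∀ lam : Fin n → ℝ, IsPositroid n k (faceBases n k P lam)) :
    IsPosTropPluecker n k P := by
  intro S hS a b c d hab hbc hcd ha hb hc hd
  obtain ⟨μ, hab_cd, hac_bd, had_bc⟩ := exists_sub_sum_eq_sub_sum P hab hbc hcd ha hb hc hd
  refine (posTropThreeTerm_sub_sum μ hab hbc hcd ha hb hc hd).mp
    (posTropThreeTerm_of_balanced (fun lam => ?_) hS hab hbc hcd ha hb hc hd hab_cd hac_bd had_bc)
  simpa only [faceBases_eq, sub_sub, Pi.add_apply, Finset.sum_add_distrib] using hfaces (μ + lam)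

end Converse

/-- **Positive tropical Plücker vectors ↔ positroidal subdivisions.** A height
function `P` on the vertices of `Δ_{k,n}` is a positive tropical Plücker vector
if and only if every face of the induced regular subdivision `D_P` is
positroidal. -/
theorem posTropPluecker_iff_positroidal_subdivision (n k : ℕ) (hkn : k ≤ n)
    (P : Finset (Fin n) → ℝ) :
    IsPosTropPluecker n k P ↔
      ∀ lam : Fin n → ℝ, IsPositroid n k (faceBases n k P lam) :=
  ⟨fun hP => hP.isPositroid_faceBases hkn, isPosTropPluecker_of_isPositroid_faceBases⟩
end
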